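/- arXiv:1304.1622 — 4 statements merged into one kernel-verified Lean document; each statement's English description precedes it below -/
import Mathlib

section
/- Let 1 < p < ∞, β > 0 and n ∈ ℕ. For every Schwartz function f : ℝ → ℂ the function t ↦ 𝒞_β f(t) is n times differentiable on (0,∞) and (∫₀^∞ t^{np} |(d^n/dt^n)(𝒞_β f)(t)|^p dt)^{1/p} ≤ (Γ(β+1)Γ(1-1/p)/Γ(β+1-1/p)) · (∫₀^∞ t^{np} |f^{(n)}(t)|^p dt)^{1/p}. (This is the boundedness of 𝒞_β, with the same norm bound Γ(β+1)Γ(1-1/p)/Γ(β+1-1/p), on the Sobolev space 𝒯_p^{(n)}(t^n) defined as the completion of the Schwartz class in the norm (1/n!)(∫₀^∞ |f^{(n)}(t)|^p t^{np} dt)^{1/p}.) -/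
/-!
The substitution `s = t u` turns the Cesàro operator into an average of dilations,
`𝒞_β f(t) = ∫₀¹ β (1-u)^(β-1) f(t u) du` for `t > 0`. Since all derivatives of the Schwartz
function `f` are bounded and the kernel is integrable, one may differentiate under the integral
sign (`hasDerivAt_cesaroDeriv`), so that
`t^n (𝒞_β f)^(n)(t) = ∫₀¹ β (1-u)^(β-1) g(t u) du` with `g(x) = x^n f^(n)(x)`.

The dilation `g(· u)` has `L^p(0,∞)` norm `u^(-1/p) ‖g‖_p`, so Minkowski's integral inequality
bounds the norm of the average by `‖g‖_p ∫₀¹ β (1-u)^(β-1) u^(-1/p) du`. This instance of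
Minkowski's inequality is `hardy_type_inequality`, proved by Hölder's inequality with respect to
the measure `w(u) u^(-1/p) du` and Tonelli's theorem. The remaining integral is
`β B(1-1/p, β) = Γ(β+1)Γ(1-1/p)/Γ(β+1-1/p)` (`lintegral_kernel`).
-/

open MeasureTheory Set

/-- The generalized Cesàro operator `𝒞_β f(t) = (β / t^β) ∫₀ᵗ (t-s)^(β-1) f(s) ds`. -/
noncomputable def cesaro (β : ℝ) (f : ℝ → ℂ) (t : ℝ) : ℂ :=
  ((β / t ^ β : ℝ) : ℂ) * ∫ s in Ioo (0 : ℝ) t, (((t - s) ^ (β - 1) : ℝ) : ℂ) * f s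

open Topology Filter
open scoped ENNReal

lemma lintegral_beta_weight {a b : ℝ} (ha : 0 < a) (hb : 0 < b) :
    ∫⁻ u in Ioo (0 : ℝ) 1, ENNReal.ofReal (u ^ (a - 1) * (1 - u) ^ (b - 1)) =
      ENNReal.ofReal (ProbabilityTheory.beta a b) := by
  have hB := ProbabilityTheory.beta_pos ha hb
  have h := ProbabilityTheory.lintegral_betaPDF_eq_one ha hb
  rw [ProbabilityTheory.lintegral_betaPDF] at h
  have h2 : ∀ u : ℝ, ENNReal.ofReal (u ^ (a - 1) * (1 - u) ^ (b - 1)) =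
      ENNReal.ofReal (ProbabilityTheory.beta a b) *
        ENNReal.ofReal (1 / ProbabilityTheory.beta a b * u ^ (a - 1) * (1 - u) ^ (b - 1)) := by
    intro u
    rw [← ENNReal.ofReal_mul hB.le]
    congr 1
    field_simp
  simp_rw [h2]
  rw [lintegral_const_mul _ (by fun_prop), h, mul_one]

lemma setLIntegral_Ioi_comp_mul_right {u : ℝ} (hu : 0 < u) {g : ℝ → ℝ≥0∞} (hg : Measurable g) :
    ENNReal.ofReal u * ∫⁻ t in Ioi (0 : ℝ), g (t * u) = ∫⁻ t in Ioi (0 : ℝ), g t := by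
  have hind : ∀ t, (Ioi (0 : ℝ)).indicator (fun t => g (t * u)) t =
      (Ioi (0 : ℝ)).indicator g (t * u) := by
    intro t
    by_cases ht : 0 < t
    · simp [indicator, ht, mul_pos ht hu]
    · have : ¬ 0 < t * u := by
        rw [mul_pos_iff_of_pos_right hu]; exact ht
      simp [indicator, ht, this]
  rw [← lintegral_indicator measurableSet_Ioi, ← lintegral_indicator measurableSet_Ioi]
  conv_rhs => rw [← Real.smul_map_volume_mul_right hu.ne']
  rw [lintegral_smul_measure, lintegral_map (hg.indicator measurableSet_Ioi) (by fun_prop),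
    abs_of_pos hu]
  simp_rw [hind, smul_eq_mul]

/-- Minkowski's integral inequality for a weighted average of dilations: the `L^p(0,∞)` norm of
`t ↦ ∫₀¹ w(u) g(t u) du` is at most `∫₀¹ w(u) u^(-1/p) du` times that of `g`. No finiteness is
assumed. -/
theorem hardy_type_inequality {p : ℝ} (hp : 1 < p) {w g : ℝ → ℝ≥0∞}
    (hw : Measurable w) (hg : Measurable g) :
    (∫⁻ t in Ioi (0 : ℝ), (∫⁻ u in Ioo (0 : ℝ) 1, w u * g (t * u)) ^ p) ^ (1 / p) ≤
      (∫⁻ u in Ioo (0 : ℝ) 1, w u * ENNReal.ofReal (u ^ (-(1 / p)))) *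
        (∫⁻ t in Ioi (0 : ℝ), g t ^ p) ^ (1 / p) := by
  have hp0 : 0 < p := by linarith
  set A := ∫⁻ u in Ioo (0 : ℝ) 1, w u * ENNReal.ofReal (u ^ (-(1 / p))) with hA
  set N := ∫⁻ t in Ioi (0 : ℝ), g t ^ p with hN
  have hd : Measurable fun u : ℝ => w u * ENNReal.ofReal (u ^ (-(1 / p))) := by fun_prop
  set ν := (volume.restrict (Ioo (0 : ℝ) 1)).withDensity
    (fun u : ℝ => w u * ENNReal.ofReal (u ^ (-(1 / p)))) with hν
  have hνA : ∫⁻ _, 1 ∂ν = A := by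
    rw [hν, lintegral_withDensity_eq_lintegral_mul _ hd (by fun_prop)]
    simp [hA]
  have hνpos : ∀ᵐ u ∂ν, 0 < u :=
    (withDensity_absolutelyContinuous _ _).ae_le
      ((ae_restrict_mem measurableSet_Ioo).mono fun u hu => hu.1)
  -- Hölder's inequality for `ν`, applied to `u^(1/p) g(t u)` and the constant `1`; the factor
  -- `u^(1/p)` cancels the density `u^(-1/p)`, and its `p`-th power `u` is the Jacobian of the
  -- dilation `t ↦ t u` used below.
  have key : ∀ t : ℝ, (∫⁻ u in Ioo (0 : ℝ) 1, w u * g (t * u)) ^ p ≤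
      A ^ (p - 1) * ∫⁻ u, ENNReal.ofReal u * g (t * u) ^ p ∂ν := by
    intro t
    have h1 : ∫⁻ u in Ioo (0 : ℝ) 1, w u * g (t * u) =
        ∫⁻ u, (ENNReal.ofReal (u ^ (1 / p)) * g (t * u)) * 1 ∂ν := by
      rw [hν, lintegral_withDensity_eq_lintegral_mul _ hd (by fun_prop)]
      refine setLIntegral_congr_fun measurableSet_Ioo fun u hu => ?_
      have : ENNReal.ofReal (u ^ (-(1 / p))) * ENNReal.ofReal (u ^ (1 / p)) = 1 := by
        rw [← ENNReal.ofReal_mul (Real.rpow_nonneg hu.1.le _), ← Real.rpow_add hu.1]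
        simp
      simp only [Pi.mul_apply, mul_one]
      calc w u * g (t * u) = w u * (ENNReal.ofReal (u ^ (-(1 / p))) *
            ENNReal.ofReal (u ^ (1 / p))) * g (t * u) := by rw [this, mul_one]
        _ = _ := by ring
    have hpq := Real.HolderConjugate.conjExponent hp
    have h2 := ENNReal.lintegral_mul_le_Lp_mul_Lq ν hpq
      (f := fun u => ENNReal.ofReal (u ^ (1 / p)) * g (t * u)) (g := fun _ => 1)
      (by fun_prop) (by fun_prop)
    simp only [Pi.mul_apply, ENNReal.one_rpow, hνA] at h2
    have h3 : ∫⁻ u, (ENNReal.ofReal (u ^ (1 / p)) * g (t * u)) ^ p ∂ν =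
        ∫⁻ u, ENNReal.ofReal u * g (t * u) ^ p ∂ν := by
      refine lintegral_congr_ae (hνpos.mono fun u hu => ?_)
      simp only
      rw [ENNReal.mul_rpow_of_nonneg _ _ hp0.le,
        ENNReal.ofReal_rpow_of_nonneg (Real.rpow_nonneg hu.le _) hp0.le,
        ← Real.rpow_mul hu.le, one_div_mul_cancel hp0.ne', Real.rpow_one]
    rw [h1]
    refine (ENNReal.rpow_le_rpow h2 hp0.le).trans_eq ?_
    rw [ENNReal.mul_rpow_of_nonneg _ _ hp0.le, ← ENNReal.rpow_mul, ← ENNReal.rpow_mul,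
      one_div_mul_cancel hp0.ne', ENNReal.rpow_one, h3, mul_comm]
    congr 2
    have : p - 1 ≠ 0 := by linarith
    unfold Real.conjExponent
    field_simp
  have total : ∫⁻ t in Ioi (0 : ℝ), (∫⁻ u in Ioo (0 : ℝ) 1, w u * g (t * u)) ^ p ≤ A ^ p * N := by
    calc _ ≤ ∫⁻ t in Ioi (0 : ℝ), A ^ (p - 1) * ∫⁻ u, ENNReal.ofReal u * g (t * u) ^ p ∂ν :=
          lintegral_mono key
      _ = A ^ (p - 1) * ∫⁻ t in Ioi (0 : ℝ), ∫⁻ u, ENNReal.ofReal u * g (t * u) ^ p ∂ν := by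
          refine lintegral_const_mul _ (Measurable.lintegral_prod_right' (f := fun x : ℝ × ℝ =>
            ENNReal.ofReal x.2 * g (x.1 * x.2) ^ p) (by fun_prop))
      _ = A ^ (p - 1) * ∫⁻ u, (∫⁻ t in Ioi (0 : ℝ), ENNReal.ofReal u * g (t * u) ^ p) ∂ν := by
          rw [lintegral_lintegral_swap]
          exact Measurable.aemeasurable (f := fun x : ℝ × ℝ =>
            ENNReal.ofReal x.2 * g (x.1 * x.2) ^ p) (by fun_prop)
      _ = A ^ (p - 1) * ∫⁻ _, N * 1 ∂ν := by
          congr 1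
          refine lintegral_congr_ae (hνpos.mono fun u hu => ?_)
          simp only
          rw [lintegral_const_mul _ (by fun_prop), mul_one,
            setLIntegral_Ioi_comp_mul_right hu (g := fun x => g x ^ p) (by fun_prop)]
      _ = A ^ p * N := by
          rw [lintegral_const_mul _ (by fun_prop), hνA, mul_comm N, ← mul_assoc]
          congr 1
          nth_rw 2 [← ENNReal.rpow_one A]
          rw [← ENNReal.rpow_add_of_nonneg _ _ (by linarith) (by norm_num)]
          simp
  refine (ENNReal.rpow_le_rpow total (by positivity)).trans_eq ?_
  rw [ENNReal.mul_rpow_of_nonneg _ _ (by positivity), ← ENNReal.rpow_mul,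
    mul_one_div_cancel hp0.ne', ENNReal.rpow_one]

/-- The integral `∫₀¹ β (1-u)^(β-1) u^k f^(k)(t u) du`, the formal `k`-th derivative of
`t ↦ ∫₀¹ β (1-u)^(β-1) f(t u) du`. It is defined for every real `t`, and for `k = 0` it agrees
with `cesaro β f` on `(0,∞)`. -/
noncomputable def cesaroDeriv (β : ℝ) (f : ℝ → ℂ) (k : ℕ) (t : ℝ) : ℂ :=
  ∫ u in Ioo (0 : ℝ) 1, ((β * (1 - u) ^ (β - 1) * u ^ k : ℝ) : ℂ) * iteratedDeriv k f (t * u)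

lemma cesaro_eq_cesaroDeriv {β : ℝ} (f : ℝ → ℂ) {t : ℝ} (ht : 0 < t) :
    cesaro β f t = cesaroDeriv β f 0 t := by
  have h := intervalIntegral.integral_comp_mul_left (a := 0) (b := 1)
    (fun s => (((t - s) ^ (β - 1) : ℝ) : ℂ) * f s) ht.ne'
  rw [mul_zero, mul_one, intervalIntegral.integral_of_le zero_le_one,
    intervalIntegral.integral_of_le ht.le, integral_Ioc_eq_integral_Ioo,
    integral_Ioc_eq_integral_Ioo] at h
  have h' : ∫ s in Ioo (0 : ℝ) t, (((t - s) ^ (β - 1) : ℝ) : ℂ) * f s =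
      (t : ℂ) * ∫ x in Ioo (0 : ℝ) 1, (((t - t * x) ^ (β - 1) : ℝ) : ℂ) * f (t * x) := by
    rw [h, ← Complex.real_smul, smul_smul, mul_inv_cancel₀ ht.ne', one_smul]
  rw [cesaro, h', cesaroDeriv, ← mul_assoc, ← integral_const_mul]
  refine setIntegral_congr_fun measurableSet_Ioo fun u hu => ?_
  have h1u : (0 : ℝ) ≤ 1 - u := by linarith [hu.2]
  simp only [iteratedDeriv_zero, pow_zero, mul_one]
  rw [← mul_assoc, ← Complex.ofReal_mul, ← Complex.ofReal_mul]
  congr 2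
  have htb : t ^ β = t * t ^ (β - 1) := by
    rw [Real.rpow_sub_one ht.ne']; field_simp
  rw [show t - t * u = t * (1 - u) by ring, Real.mul_rpow ht.le h1u, htb]
  have := (Real.rpow_pos_of_pos ht (β - 1)).ne'
  field_simp

lemma integrableOn_kernel {β : ℝ} (hβ : 0 < β) :
    IntegrableOn (fun u : ℝ => β * (1 - u) ^ (β - 1)) (Ioo (0 : ℝ) 1) := by
  have h := (intervalIntegral.intervalIntegrable_rpow' (a := 0) (b := 1)
    (r := β - 1) (by linarith)).comp_sub_left 1
  simp only [sub_zero, sub_self] at h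
  exact ((intervalIntegrable_iff_integrableOn_Ioo_of_le zero_le_one).1 h.symm).const_mul β

lemma exists_bound_iteratedDeriv (f : SchwartzMap ℝ ℂ) (k : ℕ) :
    ∃ C, ∀ x, ‖iteratedDeriv k f x‖ ≤ C := by
  obtain ⟨C, hC⟩ := f.decay 0 k
  refine ⟨C, fun x => ?_⟩
  simpa [norm_iteratedFDeriv_eq_norm_iteratedDeriv] using hC.2 x

lemma continuous_iteratedDeriv_schwartz (f : SchwartzMap ℝ ℂ) (k : ℕ) :
    Continuous (iteratedDeriv k f) :=
  (f.smooth k).continuous_iteratedDeriv k le_rfl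

lemma hasDerivAt_cesaroDeriv {β : ℝ} (hβ : 0 < β) (f : SchwartzMap ℝ ℂ) (k : ℕ) (t : ℝ) :
    HasDerivAt (cesaroDeriv β f k) (cesaroDeriv β f (k + 1) t) t := by
  obtain ⟨C, hC⟩ := exists_bound_iteratedDeriv f k
  obtain ⟨C', hC'⟩ := exists_bound_iteratedDeriv f (k + 1)
  have hK := integrableOn_kernel hβ
  have hmeas : ∀ (j : ℕ) (x : ℝ), AEStronglyMeasurable (fun u : ℝ =>
      ((β * (1 - u) ^ (β - 1) * u ^ j : ℝ) : ℂ) * iteratedDeriv j f (x * u))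
      (volume.restrict (Ioo (0 : ℝ) 1)) := by
    intro j x
    have := (continuous_iteratedDeriv_schwartz f j).measurable
    exact Measurable.aestronglyMeasurable (by fun_prop)
  have hbd : ∀ (j : ℕ) (D : ℝ), (∀ x, ‖iteratedDeriv j f x‖ ≤ D) →
      ∀ u ∈ Ioo (0 : ℝ) 1, ∀ x : ℝ,
      ‖((β * (1 - u) ^ (β - 1) * u ^ j : ℝ) : ℂ) * iteratedDeriv j f (x * u)‖ ≤
        β * (1 - u) ^ (β - 1) * D := by
    intro j D hD u hu x
    have h1 : 0 ≤ β * (1 - u) ^ (β - 1) :=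
      mul_nonneg hβ.le (Real.rpow_nonneg (by linarith [hu.2]) _)
    have h2 : u ^ j ≤ 1 := pow_le_one₀ hu.1.le hu.2.le
    have h3 : 0 ≤ u ^ j := pow_nonneg hu.1.le j
    rw [norm_mul, Complex.norm_real, Real.norm_of_nonneg (mul_nonneg h1 h3)]
    exact mul_le_mul (mul_le_of_le_one_right h1 h2) (hD _) (norm_nonneg _) h1
  refine (hasDerivAt_integral_of_dominated_loc_of_deriv_le
    (μ := volume.restrict (Ioo (0 : ℝ) 1))
    (F := fun x u => ((β * (1 - u) ^ (β - 1) * u ^ k : ℝ) : ℂ) * iteratedDeriv k f (x * u))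
    (F' := fun x u => ((β * (1 - u) ^ (β - 1) * u ^ (k + 1) : ℝ) : ℂ) *
      iteratedDeriv (k + 1) f (x * u))
    (bound := fun u => β * (1 - u) ^ (β - 1) * C') (s := univ) univ_mem
    (Eventually.of_forall fun x => hmeas k x) ?_ (hmeas (k + 1) t) ?_ (hK.mul_const C') ?_).2
  · refine (hK.mul_const C).mono' (hmeas k t) ?_
    exact (ae_restrict_mem measurableSet_Ioo).mono fun u hu => hbd k C hC u hu t
  · exact (ae_restrict_mem measurableSet_Ioo).mono fun u hu x _ => hbd (k + 1) C' hC' u hu x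
  · refine Eventually.of_forall fun u x _ => ?_
    have hd : HasDerivAt (iteratedDeriv k f) (iteratedDeriv (k + 1) f (x * u)) (x * u) := by
      rw [iteratedDeriv_succ]
      exact (((f.smooth (k + 1)).differentiable_iteratedDeriv k
        (by exact_mod_cast k.lt_succ_self)) _).hasDerivAt
    have hmul : HasDerivAt (fun y : ℝ => y * u) u x := by
      simpa using (hasDerivAt_id x).mul_const u
    have h := (hd.scomp x hmul).const_mul ((β * (1 - u) ^ (β - 1) * u ^ k : ℝ) : ℂ)
    refine h.congr_deriv ?_
    rw [Complex.real_smul]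
    push_cast
    ring

lemma iteratedDeriv_cesaroDeriv {β : ℝ} (hβ : 0 < β) (f : SchwartzMap ℝ ℂ) (n : ℕ) :
    iteratedDeriv n (cesaroDeriv β f 0) = cesaroDeriv β f n := by
  induction n with
  | zero => exact iteratedDeriv_zero
  | succ k ih =>
    rw [iteratedDeriv_succ, ih]
    exact funext fun t => (hasDerivAt_cesaroDeriv hβ f k t).deriv

lemma contDiff_cesaroDeriv {β : ℝ} (hβ : 0 < β) (f : SchwartzMap ℝ ℂ) (n : ℕ) :
    ContDiff ℝ n (cesaroDeriv β f 0) := by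
  refine contDiff_of_differentiable_iteratedDeriv fun m _ => ?_
  rw [iteratedDeriv_cesaroDeriv hβ]
  exact fun t => (hasDerivAt_cesaroDeriv hβ f m t).differentiableAt

/-- The triangle inequality for the integral, with the factor `t^n` absorbed into the dilated
function. -/
lemma ofReal_pow_mul_norm_cesaroDeriv_le {β : ℝ} (hβ : 0 < β) (f : ℝ → ℂ) (n : ℕ) {t : ℝ}
    (ht : 0 < t) :
    ENNReal.ofReal (t ^ n * ‖cesaroDeriv β f n t‖) ≤
      ∫⁻ u in Ioo (0 : ℝ) 1, ENNReal.ofReal (β * (1 - u) ^ (β - 1)) *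
        ENNReal.ofReal ((t * u) ^ n * ‖iteratedDeriv n f (t * u)‖) := by
  rw [ENNReal.ofReal_mul (by positivity), ofReal_norm]
  refine (mul_le_mul_right (enorm_integral_le_lintegral_enorm _) _).trans_eq ?_
  rw [← lintegral_const_mul' _ _ ENNReal.ofReal_ne_top]
  refine setLIntegral_congr_fun measurableSet_Ioo fun u hu => ?_
  have h1 : 0 ≤ β * (1 - u) ^ (β - 1) :=
    mul_nonneg hβ.le (Real.rpow_nonneg (by linarith [hu.2]) _)
  have h3 : 0 ≤ u ^ n := pow_nonneg hu.1.le n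
  rw [← ofReal_norm, norm_mul, Complex.norm_real, Real.norm_of_nonneg (mul_nonneg h1 h3),
    ← ENNReal.ofReal_mul (by positivity), ← ENNReal.ofReal_mul h1]
  congr 1
  ring

lemma ofReal_rpow_mul_norm {p : ℝ} (hp : 0 < p) (n : ℕ) {t : ℝ} (ht : 0 < t) (z : ℂ) :
    ENNReal.ofReal (t ^ ((n : ℝ) * p) * ‖z‖ ^ p) = ENNReal.ofReal (t ^ n * ‖z‖) ^ p := by
  rw [ENNReal.ofReal_rpow_of_nonneg (by positivity) hp.le,
    Real.mul_rpow (by positivity) (norm_nonneg _), Real.rpow_mul ht.le, Real.rpow_natCast]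

/-- The constant is the Beta integral `β B(1-1/p, β)`. -/
lemma lintegral_kernel {p β : ℝ} (hp : 1 < p) (hβ : 0 < β) :
    ∫⁻ u in Ioo (0 : ℝ) 1, ENNReal.ofReal (β * (1 - u) ^ (β - 1)) *
        ENNReal.ofReal (u ^ (-(1 / p))) =
      ENNReal.ofReal (Real.Gamma (β + 1) * Real.Gamma (1 - 1 / p) /
        Real.Gamma (β + 1 - 1 / p)) := by
  have hp' : 0 < 1 - 1 / p := by
    rw [sub_pos, div_lt_one (by linarith)]; exact hp
  have h := lintegral_beta_weight hp' hβ
  calc _ = ∫⁻ u in Ioo (0 : ℝ) 1, ENNReal.ofReal β *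
        ENNReal.ofReal (u ^ (1 - 1 / p - 1) * (1 - u) ^ (β - 1)) := by
        refine setLIntegral_congr_fun measurableSet_Ioo fun u hu => ?_
        have h1 : 0 ≤ β * (1 - u) ^ (β - 1) :=
          mul_nonneg hβ.le (Real.rpow_nonneg (by linarith [hu.2]) _)
        rw [← ENNReal.ofReal_mul h1, ← ENNReal.ofReal_mul hβ.le,
          show 1 - 1 / p - 1 = -(1 / p) by ring]
        congr 1
        ring
    _ = _ := by
        rw [lintegral_const_mul _ (by fun_prop), h, ← ENNReal.ofReal_mul hβ.le,
          ProbabilityTheory.beta, Real.Gamma_add_one hβ.ne',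
          show 1 - 1 / p + β = β + 1 - 1 / p by ring]
        congr 1
        ring

/-- Boundedness of `𝒞_β` on the Sobolev space `𝒯_p^{(n)}(t^n)`, tested on Schwartz
functions: `𝒞_β f` is `n` times differentiable on `(0,∞)` and its Sobolev norm is
controlled by `Γ(β+1)Γ(1-1/p)/Γ(β+1-1/p)` times the Sobolev norm of `f`. -/
theorem cesaro_bounded_on_sobolev
    (p : ℝ) (hp : 1 < p) (β : ℝ) (hβ : 0 < β) (n : ℕ) (f : SchwartzMap ℝ ℂ) :
    ContDiffOn ℝ n (cesaro β ⇑f) (Ioi (0 : ℝ)) ∧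
    (∫⁻ t in Ioi (0 : ℝ),
        ENNReal.ofReal (t ^ ((n : ℝ) * p) *
          ‖iteratedDerivWithin n (cesaro β ⇑f) (Ioi (0 : ℝ)) t‖ ^ p)) ^ (1 / p) ≤
      ENNReal.ofReal (Real.Gamma (β + 1) * Real.Gamma (1 - 1 / p) /
        Real.Gamma (β + 1 - 1 / p)) *
      (∫⁻ t in Ioi (0 : ℝ),
        ENNReal.ofReal (t ^ ((n : ℝ) * p) * ‖iteratedDeriv n (⇑f) t‖ ^ p)) ^ (1 / p) := by
  have hp0 : 0 < p := by linarith
  have heq : EqOn (cesaro β f) (cesaroDeriv β f 0) (Ioi 0) :=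
    fun t ht => cesaro_eq_cesaroDeriv f ht
  refine ⟨(contDiff_cesaroDeriv hβ f n).contDiffOn.congr heq, ?_⟩
  have hderiv : ∀ t ∈ Ioi (0 : ℝ),
      iteratedDerivWithin n (cesaro β f) (Ioi 0) t = cesaroDeriv β f n t := by
    intro t ht
    rw [iteratedDerivWithin_congr heq ht, iteratedDerivWithin_of_isOpen isOpen_Ioi ht,
      iteratedDeriv_cesaroDeriv hβ]
  have hmeas := (continuous_iteratedDeriv_schwartz f n).measurable
  have hardy := hardy_type_inequality hp
    (w := fun u => ENNReal.ofReal (β * (1 - u) ^ (β - 1)))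
    (g := fun x => ENNReal.ofReal (x ^ n * ‖iteratedDeriv n f x‖))
    (by fun_prop) (by fun_prop)
  rw [lintegral_kernel hp hβ] at hardy
  rw [setLIntegral_congr_fun (g := fun t => ENNReal.ofReal (t ^ n * ‖iteratedDeriv n f t‖) ^ p)
    measurableSet_Ioi fun t ht => ofReal_rpow_mul_norm hp0 n ht _]
  refine le_trans (ENNReal.rpow_le_rpow (setLIntegral_mono' measurableSet_Ioi fun t ht => ?_)
    (by positivity)) hardy
  rw [hderiv t ht, ofReal_rpow_mul_norm hp0 n ht]
  exact ENNReal.rpow_le_rpow (ofReal_pow_mul_norm_cesaroDeriv_le hβ f n ht) hp0.le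
end

section
/- Let 1 < p < ∞ and β > 0, and let T be the bounded linear operator on the complex Banach space L^p((0,∞), ℂ) induced by 𝒞_β (i.e. T[f] = [𝒞_β f] for every f ∈ L^p((0,∞), ℂ)). Then the spectrum of T equals Γ(β+1) · closure{ Γ(1 - 1/p + it)/Γ(β + 1 - 1/p + it) : t ∈ ℝ }, where the closure is taken in ℂ. -/
/-!
The substitution `f ↦ e^{x/p} f(e^x)` is an isometric isomorphism of `L^p(0, ∞)` onto `L^p(ℝ)`
(`expIso`). It turns `𝒞_β` into convolution with the integrable kernel
`k(u) = β (1 - e^{-u})^{β-1} e^{-(1-1/p)u}`, `u > 0` (`expPull_cesaro`), that is, into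
`S = ∫ k(s) D_s ds`, where `D_s` is translation by `s` (`integral_lpShift_eq`). A Beta integral gives
`k̂(t) = ∫ k(s) e^{-its} ds = Γ(β+1) Γ(1-1/p+it) / Γ(β+1-1/p+it)` (`fourier_cesaroKernel`), so the
claim is that the spectrum of `S` is the closure of the range of `k̂`.

Every nonzero spectral value `l` of `S` is a value of `k̂` (`spectrum_subset`). By Gelfand theory
there is a character `Φ` of the closed commutative algebra generated by `S` and all `D_s` with
`Φ(S) = l`. As `s ↦ D_s S` is norm continuous, `s ↦ Φ(D_s) = Φ(D_s S) / l` is a bounded continuous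
character of `ℝ`, hence `Φ(D_s) = e^{-its}` for some real `t`, and applying `Φ` to
`S² = ∫ k(s) D_s S ds` gives `l = k̂(t)`. The value `0` lies in the closure of the range of `k̂` by the
Riemann–Lebesgue lemma (`zero_mem_closure`).

Conversely, the normalized functions `e^{itx} 1_{[0,n+1]}(x)` are approximate eigenvectors of `S` for
`k̂(t)` (`exists_approx`, `mem_spectrum_of_approx`), and the spectrum is closed.
-/

open MeasureTheory Set Pointwise

open Filter Topology

/-! ### Characters -/

/-- A spectral value `l` of an element `b` of a commuting set `s` in a Banach algebra is the value at
`b` of a character of the closed subalgebra `A` generated by `s`: failure of invertibility in the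
whole algebra implies failure of invertibility in `A`, and `A` is commutative. The character is
extended by Hahn–Banach to a functional `Φ` on the whole algebra, which spares coercions to `A`;
only its multiplicativity on `A` survives. -/
theorem exists_character {B : Type*} [NormedRing B] [NormedAlgebra ℂ B] [CompleteSpace B]
    (s : Set B) (hs : ∀ a ∈ s, ∀ b ∈ s, a * b = b * a) (b : B) (hb : b ∈ s) (l : ℂ)
    (hl : l ∈ spectrum ℂ b) :
    ∃ (A : Subalgebra ℂ B) (Φ : B →L[ℂ] ℂ), s ⊆ A ∧ Φ 1 = 1 ∧
      (∀ x ∈ A, ∀ y ∈ A, Φ (x * y) = Φ x * Φ y) ∧ Φ b = l := by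
  let A := (Algebra.adjoin ℂ s).topologicalClosure
  have hsA : s ⊆ A := fun x hx => Subalgebra.le_topologicalClosure _ (Algebra.subset_adjoin hx)
  have hclosed : IsClosed (A : Set B) := Subalgebra.isClosed_topologicalClosure _
  have hcomm : ∀ x y : A, x * y = y * x := by
    let := Subalgebra.commRingTopologicalClosure (Algebra.adjoin ℂ s)
      (Algebra.isMulCommutative_adjoin ℂ hs).is_comm.comm
    exact fun x y => this.mul_comm x y
  have : CompleteSpace A := hclosed.completeSpace_coe
  let : NormedCommRing A := { (inferInstance : NormedRing A) with mul_comm := hcomm }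
  have hu : ¬ IsUnit (algebraMap ℂ A l - ⟨b, hsA hb⟩) := by
    intro hu
    exact hl (hu.map A.val)
  obtain ⟨f, hf⟩ := WeakDual.CharacterSpace.exists_apply_eq_zero hu
  obtain ⟨Φ, hΦ, -⟩ := exists_extension_norm_eq (𝕜 := ℂ) (E := B) A.toSubmodule
    ⟨(WeakDual.CharacterSpace.toAlgHom f).toLinearMap, map_continuous f⟩
  have hΦf : ∀ x : A, Φ x = f x := fun x => hΦ x
  refine ⟨A, Φ, hsA, ?_, ?_, ?_⟩
  · exact (hΦf 1).trans (map_one (WeakDual.CharacterSpace.toAlgHom f))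
  · intro x hx y hy
    rw [hΦf ⟨x, hx⟩, hΦf ⟨y, hy⟩]
    exact (hΦf (⟨x, hx⟩ * ⟨y, hy⟩)).trans (map_mul (WeakDual.CharacterSpace.toAlgHom f) _ _)
  · have : f (algebraMap ℂ A l) - f ⟨b, hsA hb⟩ = 0 := by rw [← map_sub]; exact hf
    rw [AlgHomClass.commutes] at this
    exact (hΦf ⟨b, hsA hb⟩).trans (sub_eq_zero.mp this).symm

/-- A bounded continuous character of `(ℝ, +)` is `s ↦ exp (-its)` for a real `t`. Integrating the
functional equation shows that such a function is differentiable and solves a linear equation. -/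
theorem character_eq_exp (χ : ℝ → ℂ) (hc : Continuous χ) (h0 : χ 0 = 1)
    (hadd : ∀ a b, χ (a + b) = χ a * χ b) (hb : ∃ C, ∀ a, ‖χ a‖ ≤ C) :
    ∃ t : ℝ, ∀ s : ℝ, χ s = Complex.exp (-(t * s * Complex.I)) := by
  obtain ⟨C, hC⟩ := hb
  set F : ℝ → ℂ := fun x => ∫ y in (0:ℝ)..x, χ y with hF
  have hFd : ∀ x, HasDerivAt F (χ x) x := fun x =>
    intervalIntegral.integral_hasDerivAt_right (hc.intervalIntegrable _ _)
      hc.aestronglyMeasurable.stronglyMeasurableAtFilter hc.continuousAt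
  obtain ⟨h, hh⟩ : ∃ h, F h ≠ 0 := by
    by_contra! hcon
    have h1 := hFd 0
    have : F = fun _ => 0 := funext hcon
    rw [this] at h1
    have := h1.unique (hasDerivAt_const 0 0)
    rw [h0] at this
    exact one_ne_zero this
  have key : ∀ x, χ x = (F (x + h) - F x) / F h := by
    intro x
    rw [eq_div_iff hh]
    simp only [hF]
    rw [intervalIntegral.integral_interval_sub_left (hc.intervalIntegrable _ _)
      (hc.intervalIntegrable _ _), ← intervalIntegral.integral_const_mul]
    simp_rw [← hadd]
    rw [intervalIntegral.integral_comp_add_left]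
    simp
  set c := (χ h - 1) / F h with hcdef
  have hd : ∀ x, HasDerivAt χ (c * χ x) x := by
    intro x
    have h2 : HasDerivAt (fun x => (F (x + h) - F x) / F h) ((χ (x + h) - χ x) / F h) x :=
      (((hFd (x + h)).comp_add_const x h).sub (hFd x)).div_const _
    refine (h2.congr_of_eventuallyEq (.of_forall key)).congr_deriv ?_
    rw [hadd, hcdef]
    ring
  have hexp : ∀ x : ℝ, χ x = Complex.exp (c * x) := by
    have hE : ∀ x : ℝ, HasDerivAt (fun x : ℝ => Complex.exp (-(c * x)) * χ x) 0 x := by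
      intro x
      have h3 : HasDerivAt (fun x : ℝ => -(c * (x:ℂ))) (-(c * 1)) x :=
        ((hasDerivAt_id x).ofReal_comp.const_mul c).neg
      have := h3.cexp.mul (hd x)
      refine this.congr_deriv ?_
      ring
    intro x
    have h4 := is_const_of_deriv_eq_zero (fun x => (hE x).differentiableAt)
      (fun x => (hE x).deriv) x 0
    simp only [h0, Complex.ofReal_zero, mul_zero, neg_zero, Complex.exp_zero, mul_one] at h4
    rw [Complex.exp_neg, inv_mul_eq_one₀ (Complex.exp_ne_zero _)] at h4
    exact h4.symm
  have hre : c.re = 0 := by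
    by_contra hne
    obtain ⟨n, hn⟩ := exists_nat_gt C
    have h5 := hC (n / c.re)
    rw [hexp, Complex.norm_exp] at h5
    have : (c * ((n / c.re : ℝ) : ℂ)).re = n := by
      rw [Complex.re_mul_ofReal]; field_simp
    rw [this] at h5
    have := Real.add_one_le_exp (n : ℝ)
    linarith
  refine ⟨-c.im, fun s => ?_⟩
  rw [hexp]
  congr 1
  apply Complex.ext <;> simp [hre]


/-! ### Integrals over a contraction group -/

section Abstract

variable {V : Type*} [NormedAddCommGroup V] [NormedSpace ℂ V]

/-- Strong continuity of `D` makes the orbit integrals defining `T v = ∫ k(s) D_s v ds` converge. -/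
theorem integrable_smul_orbit {D : ℝ → V →L[ℂ] V} (hD : ∀ a, ‖D a‖ ≤ 1)
    (hDc : ∀ v, Continuous fun a => D a v) {k : ℝ → ℂ} (hk : Integrable k) (v : V) :
    Integrable fun s => k s • D s v := by
  refine (hk.norm.mul_const ‖v‖).mono' (hk.aestronglyMeasurable.smul
    (hDc v).aestronglyMeasurable) (.of_forall fun s => ?_)
  rw [norm_smul]
  gcongr
  simpa using (D s).le_of_opNorm_le (hD s) v

/-- Translation is continuous in `L¹`. -/
theorem continuous_translate_L1 {k : ℝ → ℂ} (hk : Integrable k) (r : ℝ) :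
    Tendsto (fun s => ∫ u, ‖k (u - s) - k (u - r)‖) (𝓝 r) (𝓝 0) := by
  have : Fact ((1 : ENNReal) ≠ ⊤) := ⟨ENNReal.one_ne_top⟩
  let K : Lp ℂ 1 (volume : Measure ℝ) := hk.toL1 k
  have hc : Continuous fun s : ℝ => DomAddAct.mk (-s) +ᵥ K :=
    (DomAddAct.continuous_mk.comp continuous_neg).vadd continuous_const
  have h1 : Tendsto (fun s : ℝ => ‖(DomAddAct.mk (-s) +ᵥ K) - (DomAddAct.mk (-r) +ᵥ K)‖) (𝓝 r) (𝓝 0) := by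
    have := (hc.tendsto r).sub_const (DomAddAct.mk (-r) +ᵥ K)
    simpa using this.norm
  refine h1.congr fun s => ?_
  rw [L1.norm_eq_integral_norm]
  refine integral_congr_ae ?_
  have hK : ∀ s : ℝ, (DomAddAct.mk (-s) +ᵥ K : Lp ℂ 1 (volume : Measure ℝ)) =ᵐ[volume] fun u => k (u - s) := by
    intro s
    refine (DomAddAct.vadd_Lp_ae_eq _ _).trans ?_
    have : Tendsto (fun u : ℝ => -s + u) (ae volume) (ae volume) :=
      (measurePreserving_add_left volume (-s)).quasiMeasurePreserving.tendsto_ae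
    have h2 := this.eventually hk.coeFn_toL1
    filter_upwards [h2] with u hu
    rw [sub_eq_neg_add]
    exact hu
  filter_upwards [Lp.coeFn_sub (DomAddAct.mk (-s) +ᵥ K) (DomAddAct.mk (-r) +ᵥ K), hK s, hK r] with u h1 h2 h3
  rw [h1, Pi.sub_apply, h2, h3]

/-- Although `D` is only strongly continuous, `s ↦ D_s T` is norm continuous: `D_s T` is the integral
over the group with the translated kernel `k(· - s)`, and translation is continuous in `L¹`. -/
theorem continuous_mul_orbit [CompleteSpace V] {D : ℝ → V →L[ℂ] V} (hD : ∀ a, ‖D a‖ ≤ 1)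
    (hadd : ∀ a b, D (a + b) = D a * D b)
    (hDc : ∀ v, Continuous fun a => D a v) {k : ℝ → ℂ} (hk : Integrable k)
    (T : V →L[ℂ] V) (hT : ∀ v, T v = ∫ s, k s • D s v) :
    Continuous fun s => D s * T := by
  have hDT : ∀ s v, (D s * T) v = ∫ u, k (u - s) • D u v := by
    intro s v
    rw [mul_apply_eq_comp, hT,
      ← ContinuousLinearMap.integral_comp_comm _ (integrable_smul_orbit hD hDc hk v),
      ← integral_sub_right_eq_self _ s]
    congr with u
    rw [map_smul, ← mul_apply_eq_comp, ← hadd]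
    simp
  rw [continuous_iff_continuousAt]
  intro r
  rw [ContinuousAt, tendsto_iff_norm_sub_tendsto_zero]
  refine squeeze_zero (fun _ => norm_nonneg _) (fun s => ?_) (continuous_translate_L1 hk r)
  refine ContinuousLinearMap.opNorm_le_bound _ (integral_nonneg fun _ => norm_nonneg _) fun v => ?_
  rw [sub_apply, hDT, hDT, ← integral_sub
    (integrable_smul_orbit hD hDc (hk.comp_sub_right s) v)
    (integrable_smul_orbit hD hDc (hk.comp_sub_right r) v), ← integral_mul_const]
  refine norm_integral_le_of_norm_le
    ((((hk.comp_sub_right s).sub (hk.comp_sub_right r)).norm).mul_const _) (.of_forall fun u => ?_)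
  rw [← sub_smul, norm_smul]
  gcongr
  simpa using (D u).le_of_opNorm_le (hD u) v

/-- Every nonzero spectral value of `T = ∫ k(s) D_s ds` is a value of the Fourier transform of `k`.
A character `Φ` with `Φ T = l ≠ 0` satisfies `Φ (D_s) = Φ (D_s T) / l`, which is continuous in `s`,
so `Φ (D_s) = exp (-its)`; applying `Φ` to `T² = ∫ k(s) D_s T ds`, an integral in operator norm,
gives `l² = l ∫ k(s) exp (-its) ds`. -/
theorem spectrum_subset [CompleteSpace V] {D : ℝ → V →L[ℂ] V} (hD : ∀ a, ‖D a‖ ≤ 1)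
    (h0 : D 0 = 1) (hadd : ∀ a b, D (a + b) = D a * D b)
    (hDc : ∀ v, Continuous fun a => D a v) {k : ℝ → ℂ} (hk : Integrable k)
    (T : V →L[ℂ] V) (hT : ∀ v, T v = ∫ s, k s • D s v) (l : ℂ) (hl : l ∈ spectrum ℂ T)
    (hl0 : l ≠ 0) : ∃ t : ℝ, l = ∫ s : ℝ, k s * Complex.exp (-(t * s * Complex.I)) := by
  have hDD : ∀ a b, D a * D b = D b * D a := fun a b => by rw [← hadd, ← hadd, add_comm]
  have hTD : ∀ a, T * D a = D a * T := by
    intro a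
    ext v
    rw [mul_apply_eq_comp, mul_apply_eq_comp, hT, hT,
      ← ContinuousLinearMap.integral_comp_comm _ (integrable_smul_orbit hD hDc hk v)]
    congr with s
    rw [map_smul, ← mul_apply_eq_comp, hDD, mul_apply_eq_comp]
  obtain ⟨A, Φ, hA, hΦ1, hΦmul, hΦT⟩ := exists_character (insert T (range D))
    (by
      rintro a (rfl | ⟨a, rfl⟩) b (rfl | ⟨b, rfl⟩)
      · rfl
      · exact hTD b
      · exact (hTD a).symm
      · exact hDD a b) T (mem_insert _ _) l hl
  have hDA : ∀ a, D a ∈ A := fun a => hA (mem_insert_of_mem _ (mem_range_self a))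
  have hTA : T ∈ A := hA (mem_insert _ _)
  have hcont := continuous_mul_orbit hD hadd hDc hk T hT
  obtain ⟨t, ht⟩ := character_eq_exp (fun s => Φ (D s))
    (by
      have : Continuous fun s => Φ (D s * T) / l := (Φ.continuous.comp hcont).div_const l
      convert this using 2 with s
      rw [hΦmul _ (hDA s) _ hTA, hΦT, mul_div_cancel_right₀ _ hl0])
    (by simp only [h0, hΦ1])
    (fun a b => by simp only [hadd, hΦmul _ (hDA a) _ (hDA b)])
    ⟨‖Φ‖ * 1, fun a => (Φ.le_opNorm _).trans (by gcongr; exact hD a)⟩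
  refine ⟨t, ?_⟩
  have hint : Integrable fun s => k s • (D s * T) := by
    refine (hk.norm.mul_const ‖T‖).mono' (hk.aestronglyMeasurable.smul
      hcont.aestronglyMeasurable) (.of_forall fun s => ?_)
    rw [norm_smul]
    gcongr
    calc ‖D s * T‖ ≤ ‖D s‖ * ‖T‖ := norm_mul_le _ _
      _ ≤ 1 * ‖T‖ := by gcongr; exact hD s
      _ = ‖T‖ := one_mul _
  have hTT : T * T = ∫ s, k s • (D s * T) := by
    ext v
    rw [ContinuousLinearMap.integral_apply hint, mul_apply_eq_comp, hT (T v)]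
    rfl
  have h1 : l * l = ∫ s, k s * (Complex.exp (-(t * s * Complex.I)) * l) := by
    have h2 : Φ (T * T) = l * l := by rw [hΦmul _ hTA _ hTA, hΦT]
    rw [← h2, hTT, ← ContinuousLinearMap.integral_comp_comm _ hint]
    congr with s
    rw [map_smul, hΦmul _ (hDA s) _ hTA, hΦT, ht s, smul_eq_mul]
  simp_rw [← mul_assoc] at h1
  rw [integral_mul_const] at h1
  exact mul_right_cancel₀ hl0 h1

/-- If unit vectors `v n` are asymptotically eigenvectors of every `D_s` for the eigenvalue
`exp (-its)`, then by dominated convergence they are so of `T` for `∫ k(s) exp (-its) ds`, which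
therefore belongs to the spectrum. -/
theorem mem_spectrum_of_approx [CompleteSpace V] {D : ℝ → V →L[ℂ] V} (hD : ∀ a, ‖D a‖ ≤ 1)
    (hDc : ∀ v, Continuous fun a => D a v) {k : ℝ → ℂ} (hk : Integrable k)
    (T : V →L[ℂ] V) (hT : ∀ v, T v = ∫ s, k s • D s v) (t : ℝ)
    (v : ℕ → V) (hv : ∀ n, ‖v n‖ = 1)
    (hlim : ∀ s : ℝ, Tendsto (fun n => D s (v n) - Complex.exp (-(t * s * Complex.I)) • v n)
      atTop (𝓝 0)) :
    (∫ s : ℝ, k s * Complex.exp (-(t * s * Complex.I))) ∈ spectrum ℂ T := by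
  set l := ∫ s : ℝ, k s * Complex.exp (-(t * s * Complex.I)) with hl
  have hexp : ∀ s : ℝ, ‖Complex.exp (-(t * s * Complex.I))‖ = 1 := by
    intro s
    rw [Complex.norm_exp]
    simp
  have hce : Continuous fun s : ℝ => Complex.exp (-(t * s * Complex.I)) := by fun_prop
  have hki : Integrable fun s : ℝ => k s * Complex.exp (-(t * s * Complex.I)) := by
    refine hk.norm.mono' (hk.aestronglyMeasurable.mul hce.aestronglyMeasurable)
      (.of_forall fun s => ?_)
    rw [norm_mul, hexp, mul_one]
  have h1 : ∀ n, T (v n) - l • v n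
      = ∫ s, k s • (D s (v n) - Complex.exp (-(t * s * Complex.I)) • v n) := by
    intro n
    rw [hT, hl, ← integral_smul_const, ← integral_sub (integrable_smul_orbit hD hDc hk _)
      (hki.smul_const _)]
    congr with s
    rw [smul_sub, mul_smul]
  have h2 : Tendsto (fun n => T (v n) - l • v n) atTop (𝓝 0) := by
    simp_rw [h1]
    have : (0 : V) = ∫ s : ℝ, (0 : V) := by simp
    rw [this]
    refine tendsto_integral_of_dominated_convergence (fun s => ‖k s‖ * 2) (fun n => ?_)
      (hk.norm.mul_const 2) (fun n => .of_forall fun s => ?_) (.of_forall fun s => ?_)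
    · exact hk.aestronglyMeasurable.smul
        (((hDc _).sub (hce.smul continuous_const)).aestronglyMeasurable)
    · rw [norm_smul]
      gcongr
      refine (norm_sub_le _ _).trans ?_
      rw [norm_smul, hexp, hv]
      have := (D s).le_of_opNorm_le (hD s) (v n)
      rw [hv] at this
      linarith
    · simpa using (hlim s).const_smul (k s)
  intro hu
  obtain ⟨S, hS⟩ := hu.exists_left_inv
  have h3 : Tendsto (fun n => -(S (T (v n) - l • v n))) atTop (𝓝 0) := by
    simpa using ((S.continuous.tendsto 0).comp h2).neg
  have h4 : ∀ n, -(S (T (v n) - l • v n)) = v n := by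
    intro n
    have := congrArg (fun f : V →L[ℂ] V => f (v n)) hS
    simp only [mul_apply_eq_comp, one_apply_eq_self,
      sub_apply, Algebra.algebraMap_eq_smul_one,
      smul_apply] at this
    rw [← map_neg, neg_sub]
    exact this
  simp_rw [h4] at h3
  have h5 := h3.norm
  simp_rw [hv, norm_zero] at h5
  exact one_ne_zero (tendsto_nhds_unique tendsto_const_nhds h5)

end Abstract


/-! ### Translations on `L^q(ℝ)` -/

section Translation

variable {q : ENNReal} [Fact (1 ≤ q)]

/-- The translation operator `f ↦ f(· - s)` on `L^q(ℝ)`. -/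
noncomputable def lpShift (q : ENNReal) [Fact (1 ≤ q)] (s : ℝ) :
    Lp ℂ q (volume : Measure ℝ) →L[ℂ] Lp ℂ q (volume : Measure ℝ) :=
  (Lp.compMeasurePreservingₗᵢ ℂ (fun x : ℝ => x - s)
    (measurePreserving_sub_right volume s)).toContinuousLinearMap

theorem lpShift_ae (s : ℝ) (f : Lp ℂ q (volume : Measure ℝ)) :
    lpShift q s f =ᵐ[volume] fun x => f (x - s) :=
  Lp.coeFn_compMeasurePreserving f (measurePreserving_sub_right volume s)

theorem norm_lpShift_apply (s : ℝ) (f : Lp ℂ q (volume : Measure ℝ)) :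
    ‖lpShift q s f‖ = ‖f‖ :=
  (Lp.compMeasurePreservingₗᵢ ℂ (fun x : ℝ => x - s)
    (measurePreserving_sub_right volume s)).norm_map f

theorem norm_lpShift_le (s : ℝ) : ‖lpShift q s‖ ≤ 1 :=
  ContinuousLinearMap.opNorm_le_bound _ zero_le_one fun f => by
    rw [norm_lpShift_apply, one_mul]

theorem lpShift_zero : lpShift q 0 = 1 := by
  ext1 f
  apply Lp.ext
  filter_upwards [lpShift_ae 0 f] with x hx
  rw [hx, sub_zero]
  rfl

theorem lpShift_add (a b : ℝ) : lpShift q (a + b) = lpShift q a * lpShift q b := by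
  ext1 f
  apply Lp.ext
  have h : Tendsto (fun x : ℝ => x - a) (ae volume) (ae volume) :=
    (measurePreserving_sub_right volume a).quasiMeasurePreserving.tendsto_ae
  filter_upwards [lpShift_ae (a + b) f, lpShift_ae a (lpShift q b f),
    h.eventually (lpShift_ae b f)] with x h1 h2 h3
  rw [h1, mul_apply_eq_comp, h2, h3, sub_sub]

theorem continuous_lpShift (hq : q ≠ ⊤) (f : Lp ℂ q (volume : Measure ℝ)) :
    Continuous fun s => lpShift q s f := by
  let g : C(ℝ, C(ℝ, ℝ)) := (ContinuousMap.mk (fun a : ℝ × ℝ => a.2 - a.1) (by fun_prop)).curry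
  exact (continuous_const (y := f)).compMeasurePreservingLp g.continuous
    (fun s => measurePreserving_sub_right volume s) hq

theorem integrableOn_Lp {α : Type*} [MeasurableSpace α] {μ : Measure α} (f : Lp ℂ q μ) {A : Set α}
    (hA : μ A < ⊤) : IntegrableOn f A μ := by
  have : IsFiniteMeasure (μ.restrict A) := ⟨by simpa using hA⟩
  exact ((Lp.memLp f).restrict A).integrable Fact.out

/-- The restriction map from `L^q` to `L¹(A)` is bounded when `A` has finite measure. -/
theorem integral_norm_le_Lp {α : Type*} [MeasurableSpace α] {μ : Measure α} {A : Set α}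
    (hA : μ A < ⊤) : ∃ C : ℝ, ∀ f : Lp ℂ q μ, ∫ x in A, ‖f x‖ ∂μ ≤ C * ‖f‖ := by
  have : IsFiniteMeasure (μ.restrict A) := ⟨by simpa using hA⟩
  by_cases hA0 : μ A = 0
  · refine ⟨0, fun f => ?_⟩
    rw [Measure.restrict_eq_zero.mpr hA0]
    simp
  refine ⟨(μ A ^ (1 / (1 : ENNReal).toReal - 1 / q.toReal)).toReal, fun f => ?_⟩
  have hm := (Lp.memLp f).restrict A
  have h1 := eLpNorm_le_eLpNorm_mul_rpow_measure_univ (p := 1) (q := q) Fact.out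
    hm.aestronglyMeasurable
  rw [Measure.restrict_apply_univ] at h1
  have h2 : eLpNorm f q (μ.restrict A) ≤ eLpNorm f q μ := eLpNorm_restrict_le _ _ _ _
  have h3 := h1.trans (mul_le_mul_left h2 _)
  have hfin : μ A ^ (1 / (1 : ENNReal).toReal - 1 / q.toReal) ≠ ⊤ :=
    ENNReal.rpow_ne_top_of_ne_zero hA0 hA.ne
  have h4 := ENNReal.toReal_mono (ENNReal.mul_ne_top (Lp.eLpNorm_ne_top f) hfin) h3
  rw [ENNReal.toReal_mul, ← Lp.norm_def] at h4
  rw [integral_norm_eq_lintegral_enorm hm.aestronglyMeasurable, ← eLpNorm_one_eq_lintegral_enorm]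
  linarith

/-- A pointwise convolution `k * f` that lies in `L^q` agrees with the Bochner integral of translates
`∫ k(u) f(· - u) du` in `L^q`. Both sides have the same integral over each set `A` of finite measure,
by Fubini, because `g ↦ ∫_A g` is a bounded functional on `L^q`. -/
theorem integral_lpShift_eq (hq : q ≠ ⊤) {k : ℝ → ℂ} (hk : Integrable k)
    (f F : Lp ℂ q (volume : Measure ℝ))
    (hF : F =ᵐ[volume] fun x => ∫ u, k u * f (x - u)) :
    F = ∫ u, k u • lpShift q u f := by
  have hq0 : q ≠ 0 := (zero_lt_one.trans_le (Fact.out : 1 ≤ q)).ne'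
  have hI := integrable_smul_orbit norm_lpShift_le (continuous_lpShift hq) hk f
  apply Lp.ext
  refine Lp.ae_eq_of_forall_setIntegral_eq _ _ hq0 hq (fun A _ hA => integrableOn_Lp _ hA)
    (fun A _ hA => integrableOn_Lp _ hA) fun A hAm hA => ?_
  obtain ⟨C, hC⟩ := integral_norm_le_Lp (q := q) hA
  let L : Lp ℂ q (volume : Measure ℝ) →L[ℂ] ℂ := LinearMap.mkContinuous
    { toFun := fun g => ∫ x in A, g x
      map_add' := fun g h => by
        rw [← integral_add (integrableOn_Lp g hA) (integrableOn_Lp h hA)]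
        exact integral_congr_ae (ae_restrict_of_ae (Lp.coeFn_add g h))
      map_smul' := fun c g => by
        rw [RingHom.id_apply, ← integral_smul]
        exact integral_congr_ae (ae_restrict_of_ae (Lp.coeFn_smul c g)) } C
    fun g => (norm_integral_le_integral_norm _).trans (hC g)
  have hL : ∀ g, L g = ∫ x in A, g x := fun g => rfl
  have hLt : ∀ u, L (lpShift q u f) = ∫ x in A, f (x - u) := fun u => by
    rw [hL]
    exact integral_congr_ae (ae_restrict_of_ae (lpShift_ae u f))
  rw [← hL (∫ u, k u • lpShift q u f), ← ContinuousLinearMap.integral_comp_comm _ hI,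
    integral_congr_ae (ae_restrict_of_ae hF)]
  simp_rw [map_smul, hLt, smul_eq_mul, ← integral_const_mul]
  apply integral_integral_swap
  have hmeas : AEStronglyMeasurable (fun z : ℝ × ℝ => k z.2 * f (z.1 - z.2))
      ((volume.restrict A).prod volume) := by
    have : AEStronglyMeasurable (fun z : ℝ × ℝ => k z.2 * f (z.1 - z.2))
        ((volume : Measure ℝ).prod volume) :=
      hk.aestronglyMeasurable.convolution_integrand (ContinuousLinearMap.mul ℂ ℂ)
        (Lp.aestronglyMeasurable f)
    refine this.mono_ac ?_
    exact Measure.AbsolutelyContinuous.prod Measure.absolutelyContinuous_restrict .rfl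
  refine (integrable_prod_iff' hmeas).mpr ⟨.of_forall fun u => ?_, ?_⟩
  · have := (integrableOn_Lp (lpShift q u f) hA).congr (ae_restrict_of_ae (lpShift_ae u f))
    exact this.const_mul (k u)
  · refine (hk.norm.mul_const (C * ‖f‖)).mono' hmeas.norm.prod_swap.integral_prod_right'
      (.of_forall fun u => ?_)
    rw [Real.norm_of_nonneg (integral_nonneg fun _ => norm_nonneg _)]
    simp_rw [norm_mul]
    rw [integral_const_mul]
    gcongr
    have h1 := hC (lpShift q u f)
    rw [norm_lpShift_apply] at h1
    refine le_trans (le_of_eq ?_) h1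
    exact integral_congr_ae (ae_restrict_of_ae ((lpShift_ae u f).mono fun x hx => by
      simp only [hx]))

/-- Approximate joint eigenvectors of the translations: `exp (itx)` cut off to `[0, n + 1]` and
normalized. Translating the cut-off by `s` changes it only within `|s|` of the two endpoints, while
the norm before normalizing is `(n + 1) ^ (1 / q)`. -/
theorem exists_approx (hq : q ≠ ⊤) (t : ℝ) : ∃ v : ℕ → Lp ℂ q (volume : Measure ℝ),
    (∀ n, ‖v n‖ = 1) ∧ ∀ s : ℝ,
      Tendsto (fun n => lpShift q s (v n) - Complex.exp (-(t * s * Complex.I)) • v n)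
        atTop (𝓝 0) := by
  have hq1 : 1 ≤ q := Fact.out
  have hq0 : q ≠ 0 := (zero_lt_one.trans_le hq1).ne'
  have hr : 0 < 1 / q.toReal := one_div_pos.mpr (ENNReal.toReal_pos hq0 hq)
  have hexp : ∀ s : ℝ, ‖Complex.exp (t * s * Complex.I)‖ = 1 := by
    intro s
    rw [Complex.norm_exp]
    simp
  let w : ℕ → ℝ → ℂ := fun n => (Icc (0 : ℝ) (n + 1)).indicator fun x => Complex.exp (t * x * Complex.I)
  have hwn : ∀ n x, ‖w n x‖ = ‖(Icc (0 : ℝ) (n + 1)).indicator (fun _ => (1 : ℂ)) x‖ := by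
    intro n x
    by_cases hx : x ∈ Icc (0 : ℝ) (n + 1)
    · simp only [w, indicator_of_mem hx, hexp, norm_one]
    · simp only [w, indicator_of_notMem hx]
  have hwm : ∀ n, MemLp (w n) q volume := by
    intro n
    have h1 : MemLp ((Icc (0 : ℝ) (n + 1)).indicator fun _ => (1 : ℂ)) q volume :=
      memLp_indicator_const _ measurableSet_Icc _ (Or.inr (by simp))
    refine h1.of_le ?_ (.of_forall fun x => (hwn n x).le)
    refine AEStronglyMeasurable.indicator ?_ measurableSet_Icc
    exact Continuous.aestronglyMeasurable (by fun_prop)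
  let W : ℕ → Lp ℂ q (volume : Measure ℝ) := fun n => (hwm n).toLp (w n)
  have hWn : ∀ n : ℕ, ‖W n‖ = ((n : ℝ) + 1) ^ (1 / q.toReal) := by
    intro n
    rw [Lp.norm_toLp, eLpNorm_congr_norm_ae (.of_forall (hwn n)),
      eLpNorm_indicator_const measurableSet_Icc hq0 hq]
    rw [ENNReal.toReal_mul, ← ENNReal.toReal_rpow]
    simp
    rw [ENNReal.toReal_ofReal (by positivity)]
  have hpos : ∀ n : ℕ, 0 < ((n : ℝ) + 1) ^ (1 / q.toReal) := fun n => by positivity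
  have hdiff : ∀ (s : ℝ) (n : ℕ),
      ‖lpShift q s (W n) - Complex.exp (-(t * s * Complex.I)) • W n‖
        ≤ 2 * (2 * |s|) ^ (1 / q.toReal) := by
    intro s n
    have hfin : ∀ a b : ℝ, volume (Icc a b) ≠ ⊤ := fun a b => by simp
    set E₁ := indicatorConstLp (μ := (volume : Measure ℝ)) q (measurableSet_Icc (a := -|s|) (b := |s|)) (hfin _ _) (1 : ℂ) with hE₁
    set E₂ := indicatorConstLp (μ := (volume : Measure ℝ)) q (measurableSet_Icc (a := (n + 1 : ℝ) - |s|) (b := n + 1 + |s|))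
      (hfin _ _) (1 : ℂ) with hE₂
    have hn1 : ‖E₁‖ = (2 * |s|) ^ (1 / q.toReal) := by
      rw [hE₁, norm_indicatorConstLp hq0 hq, norm_one, one_mul, Measure.real, Real.volume_Icc,
        ENNReal.toReal_ofReal (by linarith [abs_nonneg s])]
      ring_nf
    have hn2 : ‖E₂‖ = (2 * |s|) ^ (1 / q.toReal) := by
      rw [hE₂, norm_indicatorConstLp hq0 hq, norm_one, one_mul, Measure.real, Real.volume_Icc,
        ENNReal.toReal_ofReal (by linarith [abs_nonneg s])]
      ring_nf
    calc _ ≤ ‖E₁ + E₂‖ := by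
          apply Lp.norm_le_norm_of_ae_le
          have h : Tendsto (fun x : ℝ => x - s) (ae volume) (ae volume) :=
            (measurePreserving_sub_right volume s).quasiMeasurePreserving.tendsto_ae
          filter_upwards [Lp.coeFn_sub (lpShift q s (W n)) (Complex.exp (-(t * s * Complex.I)) • W n),
            lpShift_ae s (W n), h.eventually (hwm n).coeFn_toLp, (hwm n).coeFn_toLp,
            Lp.coeFn_smul (Complex.exp (-(t * s * Complex.I))) (W n), Lp.coeFn_add E₁ E₂,
            indicatorConstLp_coeFn (p := q) (hs := (measurableSet_Icc (a := -|s|) (b := |s|)))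
              (hμs := hfin _ _) (c := (1 : ℂ)),
            indicatorConstLp_coeFn (p := q)
              (hs := (measurableSet_Icc (a := (n + 1 : ℝ) - |s|) (b := n + 1 + |s|)))
              (hμs := hfin _ _) (c := (1 : ℂ))] with x h1 h2 h3 h4 h5 h6 h7 h8
          rw [h1, Pi.sub_apply, h2, h3, h5, Pi.smul_apply, h4, h6, Pi.add_apply, h7, h8]
          have hs1 := neg_abs_le s
          have hs2 := le_abs_self s
          have hval : ∀ y, w n y = (Icc (0 : ℝ) (n + 1)).indicator
            (fun x => Complex.exp (t * x * Complex.I)) y := fun y => rfl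
          have hmul : Complex.exp (-(t * s * Complex.I)) * Complex.exp (t * x * Complex.I)
              = Complex.exp (t * ((x - s : ℝ) : ℂ) * Complex.I) := by
            rw [← Complex.exp_add]
            congr 1
            push_cast
            ring
          have hexp' : ‖Complex.exp (-(t * s * Complex.I))‖ = 1 := by
            rw [Complex.exp_neg, norm_inv, hexp, inv_one]
          -- If exactly one of `x`, `x - s` lies in `[0, n + 1]`, then `x` is within `|s|` of an endpoint.
          by_cases ha : x - s ∈ Icc (0 : ℝ) (n + 1) <;> by_cases hb : x ∈ Icc (0 : ℝ) (n + 1)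
          · rw [hval, hval, indicator_of_mem ha, indicator_of_mem hb, smul_eq_mul, hmul, sub_self,
              norm_zero]
            exact norm_nonneg _
          · rw [hval, hval, indicator_of_mem ha, indicator_of_notMem hb, smul_zero, sub_zero, hexp]
            by_cases hx : x ∈ Icc (-|s|) |s| <;>
              by_cases hx' : x ∈ Icc ((n + 1 : ℝ) - |s|) (n + 1 + |s|) <;>
              simp only [indicator_of_mem, indicator_of_notMem, hx, hx', not_false_eq_true]
            · norm_num
            · simp
            · simp
            · exfalso
              simp only [mem_Icc, not_and_or, not_le] at *
              grind
          · rw [hval, hval, indicator_of_notMem ha, indicator_of_mem hb, zero_sub, norm_neg,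
              norm_smul, hexp, hexp', one_mul]
            by_cases hx : x ∈ Icc (-|s|) |s| <;>
              by_cases hx' : x ∈ Icc ((n + 1 : ℝ) - |s|) (n + 1 + |s|) <;>
              simp only [indicator_of_mem, indicator_of_notMem, hx, hx', not_false_eq_true]
            · norm_num
            · simp
            · simp
            · exfalso
              simp only [mem_Icc, not_and_or, not_le] at *
              grind
          · rw [hval, hval, indicator_of_notMem ha, indicator_of_notMem hb, smul_zero, sub_zero,
              norm_zero]
            exact norm_nonneg _
      _ ≤ ‖E₁‖ + ‖E₂‖ := norm_add_le _ _
      _ = _ := by rw [hn1, hn2]; ring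
  have hcn : ∀ n : ℕ, ‖(((((n : ℝ) + 1) ^ (1 / q.toReal))⁻¹ : ℝ) : ℂ) • W n‖ = 1 := by
    intro n
    rw [norm_smul, hWn, Complex.norm_real, Real.norm_of_nonneg (inv_nonneg.mpr (hpos n).le),
      inv_mul_cancel₀ (hpos n).ne']
  refine ⟨fun n => (((((n : ℝ) + 1) ^ (1 / q.toReal))⁻¹ : ℝ) : ℂ) • W n, hcn, fun s => ?_⟩
  · rw [tendsto_zero_iff_norm_tendsto_zero]
    refine squeeze_zero (g := fun n : ℕ =>
      (((n : ℝ) + 1) ^ (1 / q.toReal))⁻¹ * (2 * (2 * |s|) ^ (1 / q.toReal)))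
      (fun _ => norm_nonneg _) (fun n => ?_) ?_
    · rw [map_smul, smul_comm (Complex.exp _), ← smul_sub, norm_smul, Complex.norm_real,
        Real.norm_of_nonneg (inv_nonneg.mpr (hpos n).le)]
      exact mul_le_mul_of_nonneg_left (hdiff s n) (inv_nonneg.mpr (hpos n).le)
    · rw [show (0 : ℝ) = 0 * (2 * (2 * |s|) ^ (1 / q.toReal)) by ring]
      refine Tendsto.mul_const _ (Tendsto.inv_tendsto_atTop ?_)
      exact (tendsto_rpow_atTop hr).comp
        (tendsto_atTop_add_const_right _ _ tendsto_natCast_atTop_atTop)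

end Translation


/-! ### The exponential change of variables -/

section Exponential

theorem image_exp_preimage (N : Set ℝ) : Real.exp '' (Real.exp ⁻¹' N) = N ∩ Ioi 0 := by
  rw [image_preimage_eq_inter_range, Real.range_exp]

theorem lintegral_exp_image {s : Set ℝ} (hs : MeasurableSet s) (g : ℝ → ENNReal) :
    ∫⁻ x in Real.exp '' s, g x = ∫⁻ x in s, ENNReal.ofReal (Real.exp x) * g (Real.exp x) := by
  rw [lintegral_image_eq_lintegral_abs_deriv_mul hs
    (fun x _ => (Real.hasDerivAt_exp x).hasDerivWithinAt) Real.exp_injective.injOn]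
  simp_rw [abs_of_pos (Real.exp_pos _)]

theorem quasiMeasurePreserving_exp :
    Measure.QuasiMeasurePreserving Real.exp volume (volume.restrict (Ioi (0 : ℝ))) := by
  refine ⟨Real.measurable_exp, Measure.AbsolutelyContinuous.mk fun N hN h0 => ?_⟩
  rw [Measure.map_apply Real.measurable_exp hN]
  rw [Measure.restrict_apply hN, ← image_exp_preimage, ← setLIntegral_one,
    lintegral_exp_image (Real.measurable_exp hN),
    lintegral_eq_zero_iff (by fun_prop)] at h0
  rw [← Measure.restrict_eq_zero, ← ae_eq_bot]
  rw [← Filter.eventually_false_iff_eq_bot]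
  filter_upwards [h0] with x hx
  simp [Real.exp_pos, not_le.mpr] at hx

theorem quasiMeasurePreserving_log :
    Measure.QuasiMeasurePreserving Real.log (volume.restrict (Ioi (0 : ℝ))) volume := by
  refine ⟨Real.measurable_log, Measure.AbsolutelyContinuous.mk fun N hN h0 => ?_⟩
  rw [Measure.map_apply Real.measurable_log hN, Measure.restrict_apply (Real.measurable_log hN)]
  have : Real.log ⁻¹' N ∩ Ioi 0 = Real.exp '' N := by
    rw [← image_exp_preimage, ← preimage_comp]
    congr 1
    ext x
    simp
  rw [this, ← setLIntegral_one, lintegral_exp_image hN, setLIntegral_measure_zero _ _ h0]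

/-- The substitution `f ↦ e^{x/p} f(e^x)`, which carries functions on `(0, ∞)` to functions on `ℝ`;
the factor `e^{x/p}` makes it isometric for the `L^p` norms. -/
noncomputable def expPull (p : ℝ) (f : ℝ → ℂ) (x : ℝ) : ℂ :=
  (Real.exp (x / p) : ℂ) * f (Real.exp x)

theorem expPull_congr {p : ℝ} {f g : ℝ → ℂ} (h : f =ᵐ[volume.restrict (Ioi (0 : ℝ))] g) :
    expPull p f =ᵐ[volume] expPull p g := by
  filter_upwards [quasiMeasurePreserving_exp.tendsto_ae.eventually h] with x hx
  simp only [expPull, hx]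

theorem eLpNorm_expPull {p : ℝ} (hp : 1 < p) (f : ℝ → ℂ) :
    eLpNorm (expPull p f) (ENNReal.ofReal p) volume
      = eLpNorm f (ENNReal.ofReal p) (volume.restrict (Ioi (0 : ℝ))) := by
  have hp0 : 0 < p := by linarith
  have h0 : ENNReal.ofReal p ≠ 0 := by simpa using hp0
  rw [eLpNorm_eq_lintegral_rpow_enorm_toReal h0 ENNReal.ofReal_ne_top,
    eLpNorm_eq_lintegral_rpow_enorm_toReal h0 ENNReal.ofReal_ne_top,
    ENNReal.toReal_ofReal hp0.le, ← Real.range_exp, ← image_univ,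
    lintegral_exp_image MeasurableSet.univ, Measure.restrict_univ]
  congr 2 with x
  rw [expPull, enorm_mul, ENNReal.mul_rpow_of_nonneg _ _ hp0.le]
  congr 1
  rw [← ofReal_norm, Complex.norm_real, Real.norm_of_nonneg (Real.exp_pos _).le,
    ENNReal.ofReal_rpow_of_pos (Real.exp_pos _), ← Real.exp_mul, div_mul_cancel₀ _ hp0.ne']

theorem memLp_expPull {p : ℝ} (hp : 1 < p) {f : ℝ → ℂ}
    (hf : MemLp f (ENNReal.ofReal p) (volume.restrict (Ioi (0 : ℝ)))) :
    MemLp (expPull p f) (ENNReal.ofReal p) volume := by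
  refine ⟨?_, by rw [eLpNorm_expPull hp]; exact hf.2⟩
  refine AEStronglyMeasurable.mul (Continuous.aestronglyMeasurable (by fun_prop)) ?_
  exact hf.1.comp_quasiMeasurePreserving quasiMeasurePreserving_exp

/-- The isometry `L^p(0, ∞) → L^p(ℝ)` induced by `expPull`. -/
noncomputable def expIso (p : ℝ) (hp : 1 < p) [Fact (1 ≤ ENNReal.ofReal p)] :
    Lp ℂ (ENNReal.ofReal p) (volume.restrict (Ioi (0 : ℝ))) →ₗᵢ[ℂ]
      Lp ℂ (ENNReal.ofReal p) (volume : Measure ℝ) where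
  toFun f := (memLp_expPull hp (Lp.memLp f)).toLp _
  map_add' f g := by
    apply Lp.ext
    filter_upwards [(memLp_expPull hp (Lp.memLp (f + g))).coeFn_toLp,
      (memLp_expPull hp (Lp.memLp f)).coeFn_toLp, (memLp_expPull hp (Lp.memLp g)).coeFn_toLp,
      Lp.coeFn_add ((memLp_expPull hp (Lp.memLp f)).toLp _)
        ((memLp_expPull hp (Lp.memLp g)).toLp _),
      expPull_congr (p := p) (Lp.coeFn_add f g)] with x h1 h2 h3 h4 h5
    rw [h1, h4, Pi.add_apply, h2, h3, h5]
    simp only [expPull, Pi.add_apply, mul_add]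
  map_smul' c f := by
    apply Lp.ext
    filter_upwards [(memLp_expPull hp (Lp.memLp (c • f))).coeFn_toLp,
      (memLp_expPull hp (Lp.memLp f)).coeFn_toLp,
      Lp.coeFn_smul c ((memLp_expPull hp (Lp.memLp f)).toLp _),
      expPull_congr (p := p) (Lp.coeFn_smul c f)] with x h1 h2 h4 h5
    rw [h1, RingHom.id_apply, h4, Pi.smul_apply, h2, h5]
    simp only [expPull, Pi.smul_apply, smul_eq_mul]
    ring
  norm_map' f := by
    change ‖(memLp_expPull hp (Lp.memLp f)).toLp _‖ = _
    rw [Lp.norm_toLp, eLpNorm_expPull hp, Lp.norm_def]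

theorem expIso_ae {p : ℝ} (hp : 1 < p) [Fact (1 ≤ ENNReal.ofReal p)]
    (f : Lp ℂ (ENNReal.ofReal p) (volume.restrict (Ioi (0 : ℝ)))) :
    expIso p hp f =ᵐ[volume] expPull p f :=
  (memLp_expPull hp (Lp.memLp f)).coeFn_toLp

theorem expIso_surjective {p : ℝ} (hp : 1 < p) [Fact (1 ≤ ENNReal.ofReal p)] :
    Function.Surjective (expIso p hp) := by
  intro g
  set h : ℝ → ℂ := fun t => (Real.exp (-(Real.log t / p)) : ℂ) * g (Real.log t) with hh
  have hE : expPull p h = g := by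
    ext x
    simp only [expPull, hh, Real.log_exp]
    rw [← mul_assoc, ← Complex.ofReal_mul, ← Real.exp_add]
    simp
  have hm : MemLp h (ENNReal.ofReal p) (volume.restrict (Ioi (0 : ℝ))) := by
    refine ⟨?_, ?_⟩
    · refine AEStronglyMeasurable.mul (Measurable.aestronglyMeasurable (by fun_prop)) ?_
      exact (Lp.aestronglyMeasurable g).comp_quasiMeasurePreserving quasiMeasurePreserving_log
    · rw [← eLpNorm_expPull hp, hE]
      exact Lp.eLpNorm_lt_top g
  refine ⟨hm.toLp h, ?_⟩
  apply Lp.ext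
  filter_upwards [expIso_ae hp (hm.toLp h), expPull_congr (p := p) hm.coeFn_toLp] with x h1 h2
  rw [h1, h2, hE]

end Exponential

/-! ### The convolution kernel and its Fourier transform -/

section Kernel

/-- The kernel `u ↦ β (1 - e^{-u})^{β-1} e^{-(1-1/p)u}` on `u > 0`, extended by zero: the Cesàro
operator becomes convolution with it under `expPull`. -/
noncomputable def cesaroKernel (p β : ℝ) : ℝ → ℂ := (Ioi (0 : ℝ)).indicator fun u =>
  ((β * (1 - Real.exp (-u)) ^ (β - 1) * Real.exp (-((1 - 1 / p) * u)) : ℝ) : ℂ)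

/-- The change of variables turns `𝒞_β` into convolution with `cesaroKernel`. This holds pointwise
for every `f`, since changes of variables preserve the Bochner integral even when it is not
convergent. -/
theorem expPull_cesaro {p β : ℝ} (f : ℝ → ℂ) (x : ℝ) :
    expPull p (cesaro β f) x = ∫ u, cesaroKernel p β u * expPull p f (x - u) := by
  have himg : Ioo (0 : ℝ) (Real.exp x) = Real.exp '' Iio x := by
    ext y
    constructor
    · rintro ⟨h1, h2⟩
      exact ⟨Real.log y, (Real.log_lt_iff_lt_exp h1).mpr h2, Real.exp_log h1⟩
    · rintro ⟨z, hz, rfl⟩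
      exact ⟨Real.exp_pos z, Real.exp_lt_exp.mpr hz⟩
  rw [expPull, cesaro, himg, integral_image_eq_integral_abs_deriv_smul measurableSet_Iio
    (fun x _ => (Real.hasDerivAt_exp x).hasDerivWithinAt) Real.exp_injective.injOn,
    ← integral_sub_left_eq_self _ volume x, ← integral_const_mul, ← integral_const_mul,
    ← integral_indicator measurableSet_Iio]
  congr with y
  by_cases hy : y < x
  · have hxy : x - y ∈ Ioi (0 : ℝ) := by simpa using hy
    rw [indicator_of_mem (show y ∈ Iio x from hy), cesaroKernel, indicator_of_mem hxy, expPull,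
      sub_sub_cancel, abs_of_pos (Real.exp_pos _), Complex.real_smul]
    simp only [← mul_assoc, ← Complex.ofReal_mul]
    congr 2
    have h1 : Real.exp x - Real.exp y = Real.exp x * (1 - Real.exp (-(x - y))) := by
      rw [mul_sub, ← Real.exp_add]
      ring_nf
    have h2 : 0 ≤ 1 - Real.exp (-(x - y)) := by
      rw [sub_nonneg, Real.exp_le_one_iff]
      linarith
    rw [h1, Real.mul_rpow (Real.exp_pos x).le h2, ← Real.exp_mul, ← Real.exp_mul, div_eq_mul_inv β,
      ← Real.exp_neg]
    have h3 : Real.exp (x / p) * (Real.exp (-(x * β)) * (Real.exp y * Real.exp (x * (β - 1))))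
        = Real.exp (-((1 - 1 / p) * (x - y))) * Real.exp (y / p) := by
      simp only [← Real.exp_add]
      congr 1
      ring
    linear_combination (β * (1 - Real.exp (-(x - y))) ^ (β - 1)) * h3
  · have hxy : x - y ∉ Ioi (0 : ℝ) := by simpa using hy
    rw [indicator_of_notMem (show y ∉ Iio x from hy), cesaroKernel, indicator_of_notMem hxy,
      zero_mul]

theorem image_exp_neg : (fun u : ℝ => Real.exp (-u)) '' Ioi 0 = Ioo 0 1 := by
  ext y
  constructor
  · rintro ⟨z, hz, rfl⟩
    exact ⟨Real.exp_pos _, by simpa using hz⟩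
  · rintro ⟨h1, h2⟩
    exact ⟨-Real.log y, by simpa using Real.log_neg h1 h2, by simp [Real.exp_log h1]⟩

/-- The integrand of the Fourier transform of the kernel is the pullback of a Beta integrand under
`w = e^{-u}`. -/
theorem cesaroKernel_mul_exp (p β t : ℝ) :
    (fun s : ℝ => cesaroKernel p β s * Complex.exp (-(t * s * Complex.I))) =
      (Ioi (0 : ℝ)).indicator fun u => (β : ℂ) * (|-Real.exp (-u)| •
        (fun w : ℝ => (w : ℂ) ^ ((1 - 1 / (p : ℂ) + t * Complex.I) - 1) *
          (1 - (w : ℂ)) ^ ((β : ℂ) - 1)) (Real.exp (-u))) := by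
  ext u
  by_cases hu : u ∈ Ioi (0 : ℝ)
  · have h2 : 0 ≤ 1 - Real.exp (-u) := by
      rw [sub_nonneg, Real.exp_le_one_iff]
      linarith [mem_Ioi.mp hu]
    rw [cesaroKernel, indicator_of_mem hu, indicator_of_mem hu, abs_neg,
      abs_of_pos (Real.exp_pos _), Complex.real_smul]
    simp only
    rw [Complex.cpow_def_of_ne_zero (by exact_mod_cast (Real.exp_pos _).ne'),
      ← Complex.ofReal_log (Real.exp_pos _).le, Real.log_exp, ← Complex.ofReal_one,
      ← Complex.ofReal_sub, ← Complex.ofReal_sub, ← Complex.ofReal_cpow h2]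
    push_cast
    have h3 : Complex.exp (-((1 - 1 / (p : ℂ)) * u)) * Complex.exp (-(t * u * Complex.I))
        = Complex.exp (-u) * Complex.exp (-(u : ℂ) * (1 - 1 / (p : ℂ) + t * Complex.I - 1)) := by
      simp only [← Complex.exp_add]
      congr 1
      ring
    linear_combination ((β : ℂ) * (((1 - Real.exp (-u)) ^ (β - 1) : ℝ) : ℂ)) * h3
  · rw [cesaroKernel, indicator_of_notMem hu, indicator_of_notMem hu, zero_mul]

theorem re_symbol_pos {p : ℝ} (hp : 1 < p) (t : ℝ) :
    0 < (1 - 1 / (p : ℂ) + t * Complex.I).re := by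
  have : (1 - 1 / (p : ℂ) + t * Complex.I) = ((1 - 1 / p : ℝ) : ℂ) + t * Complex.I := by push_cast; rfl
  rw [this]
  simp
  exact inv_lt_one_of_one_lt₀ hp

theorem hasDeriv_exp_neg (u : ℝ) (s : Set ℝ) :
    HasDerivWithinAt (fun u : ℝ => Real.exp (-u)) (-Real.exp (-u)) s u := by
  have := ((hasDerivAt_neg u).exp).hasDerivWithinAt (s := s)
  simpa using this

theorem injOn_exp_neg (s : Set ℝ) : InjOn (fun u : ℝ => Real.exp (-u)) s :=
  fun _ _ _ _ h => neg_injective (Real.exp_injective h)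

theorem integrable_cesaroKernel {p β : ℝ} (hp : 1 < p) (hβ : 0 < β) :
    Integrable (cesaroKernel p β) := by
  have h1 := Complex.betaIntegral_convergent (re_symbol_pos hp 0)
    (v := (β : ℂ)) (by simpa using hβ)
  rw [intervalIntegrable_iff_integrableOn_Ioo_of_le zero_le_one, ← image_exp_neg,
    integrableOn_image_iff_integrableOn_abs_deriv_smul measurableSet_Ioi
    (fun u _ => hasDeriv_exp_neg u _) (injOn_exp_neg _)] at h1
  have h2 := (integrable_indicator_iff measurableSet_Ioi).mpr (h1.const_mul (β : ℂ))
  have h3 := cesaroKernel_mul_exp p β 0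
  simp only [Complex.ofReal_zero, zero_mul, neg_zero, Complex.exp_zero, mul_one] at h3 h2
  rw [show cesaroKernel p β = fun s => cesaroKernel p β s from rfl, h3]
  exact h2

/-- The Fourier transform of the kernel is `β B(z, β)` with `z = 1 - 1/p + it`, that is,
`Γ(β+1) Γ(z) / Γ(β+z)`. -/
theorem fourier_cesaroKernel {p β : ℝ} (hp : 1 < p) (hβ : 0 < β) (t : ℝ) :
    ∫ s : ℝ, cesaroKernel p β s * Complex.exp (-(t * s * Complex.I)) =
      (Real.Gamma (β + 1) : ℂ) * (Complex.Gamma (1 - 1 / (p : ℂ) + t * Complex.I) /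
        Complex.Gamma ((β : ℂ) + 1 - 1 / (p : ℂ) + t * Complex.I)) := by
  have hz := re_symbol_pos hp t
  have hb : 0 < (β : ℂ).re := by simpa using hβ
  rw [cesaroKernel_mul_exp, integral_indicator measurableSet_Ioi, integral_const_mul,
    ← integral_image_eq_integral_abs_deriv_smul measurableSet_Ioi
    (fun u _ => hasDeriv_exp_neg u _) (injOn_exp_neg _)
    (fun w : ℝ => (w : ℂ) ^ ((1 - 1 / (p : ℂ) + t * Complex.I) - 1) *
      (1 - (w : ℂ)) ^ ((β : ℂ) - 1)), image_exp_neg, ← integral_Ioc_eq_integral_Ioo, ← intervalIntegral.integral_of_le zero_le_one]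
  change (β : ℂ) * Complex.betaIntegral _ _ = _
  have h1 := Complex.Gamma_mul_Gamma_eq_betaIntegral hz hb
  have h2 : (β : ℂ) + 1 - 1 / (p : ℂ) + t * Complex.I
    = (1 - 1 / (p : ℂ) + t * Complex.I) + β := by ring
  have h3 : Complex.Gamma ((1 - 1 / (p : ℂ) + t * Complex.I) + β) ≠ 0 :=
    Complex.Gamma_ne_zero_of_re_pos (by rw [Complex.add_re]; exact add_pos hz hb)
  rw [h2, ← mul_div_assoc, eq_div_iff h3, Real.Gamma_add_one hβ.ne']
  push_cast
  rw [← Complex.Gamma_ofReal]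
  linear_combination (-(β : ℂ)) * h1

/-- The Riemann–Lebesgue lemma. Integrability is not needed: if it fails, all the integrals are `0` by
convention. -/
theorem zero_mem_closure {k : ℝ → ℂ} :
    (0 : ℂ) ∈ closure (range fun t : ℝ => ∫ s : ℝ, k s * Complex.exp (-(t * s * Complex.I))) := by
  refine mem_closure_of_tendsto (Real.tendsto_integral_exp_smul_cocompact k)
    (.of_forall fun w => ⟨2 * Real.pi * w, ?_⟩)
  refine integral_congr_ae (.of_forall fun s => ?_)
  simp only
  rw [Circle.smul_def, Real.fourierChar_apply, smul_eq_mul, mul_comm]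
  congr 2
  push_cast
  ring

end Kernel

/-! ### The spectrum -/

/-- The spectrum of the generalized Cesàro operator `𝒞_β` on `L^p((0,∞),ℂ)` equals
`Γ(β+1) · closure { Γ(1-1/p+it)/Γ(β+1-1/p+it) : t ∈ ℝ }`. -/
theorem cesaro_spectrum
    (p : ℝ) (hp : 1 < p) (β : ℝ) (hβ : 0 < β)
    [Fact (1 ≤ ENNReal.ofReal p)]
    (T : Lp ℂ (ENNReal.ofReal p) (volume.restrict (Ioi (0 : ℝ))) →L[ℂ]
         Lp ℂ (ENNReal.ofReal p) (volume.restrict (Ioi (0 : ℝ))))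
    (hT : ∀ f : Lp ℂ (ENNReal.ofReal p) (volume.restrict (Ioi (0 : ℝ))),
      (T f : ℝ → ℂ) =ᵐ[volume.restrict (Ioi (0 : ℝ))] cesaro β ⇑f) :
    spectrum ℂ T =
      ((Real.Gamma (β + 1) : ℂ)) •
        closure {w : ℂ | ∃ t : ℝ,
          w = Complex.Gamma (1 - 1 / (p : ℂ) + t * Complex.I) /
              Complex.Gamma ((β : ℂ) + 1 - 1 / (p : ℂ) + t * Complex.I)} := by
  have hq : ENNReal.ofReal p ≠ ⊤ := ENNReal.ofReal_ne_top
  set J := LinearIsometryEquiv.ofSurjective (expIso p hp) (expIso_surjective hp) with hJ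
  have hJae : ∀ f, J f =ᵐ[volume] expPull p f := fun f => expIso_ae hp f
  -- `S` is the operator `T` transported to `L^p(ℝ)`, where it is a convolution.
  set S := J.toContinuousLinearEquiv.conjContinuousAlgEquiv T with hS
  have hSapp : ∀ g, S g = J (T (J.symm g)) := fun g => rfl
  have hspec : spectrum ℂ S = spectrum ℂ T :=
    AlgEquiv.spectrum_eq J.toContinuousLinearEquiv.conjContinuousAlgEquiv T
  set k := cesaroKernel p β with hkdef
  have hk : Integrable k := integrable_cesaroKernel hp hβ
  have hSk : ∀ g, S g = ∫ u, k u • lpShift (ENNReal.ofReal p) u g := by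
    intro g
    refine integral_lpShift_eq hq hk g (S g) ?_
    rw [hSapp]
    have hg : expPull p (J.symm g) =ᵐ[volume] g := by
      have := hJae (J.symm g)
      rw [J.apply_symm_apply] at this
      exact this.symm
    filter_upwards [hJae (T (J.symm g)), expPull_congr (p := p) (hT (J.symm g))] with x h1 h2
    rw [h1, h2, expPull_cesaro]
    refine integral_congr_ae ?_
    have h3 : Tendsto (fun u : ℝ => x - u) (ae volume) (ae volume) :=
      (Measure.measurePreserving_sub_left volume x).quasiMeasurePreserving.tendsto_ae
    filter_upwards [h3.eventually hg] with u hu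
    rw [hu]
  set m : ℝ → ℂ := fun t => ∫ s : ℝ, k s * Complex.exp (-(t * s * Complex.I)) with hm
  have hrange : (Real.Gamma (β + 1) : ℂ) • {w : ℂ | ∃ t : ℝ,
      w = Complex.Gamma (1 - 1 / (p : ℂ) + t * Complex.I) /
        Complex.Gamma ((β : ℂ) + 1 - 1 / (p : ℂ) + t * Complex.I)} = range m := by
    ext z
    simp only [mem_smul_set, mem_ofPred_eq, mem_range, hm, fourier_cesaroKernel hp hβ, hkdef,
      smul_eq_mul]
    constructor
    · rintro ⟨_, ⟨t, rfl⟩, rfl⟩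
      exact ⟨t, rfl⟩
    · rintro ⟨t, rfl⟩
      exact ⟨_, ⟨t, rfl⟩, rfl⟩
  have hΓ : (Real.Gamma (β + 1) : ℂ) ≠ 0 := by
    exact_mod_cast (Real.Gamma_pos_of_pos (by linarith)).ne'
  have hcl := closure_smul₀' hΓ {w : ℂ | ∃ t : ℝ,
      w = Complex.Gamma (1 - 1 / (p : ℂ) + t * Complex.I) /
        Complex.Gamma ((β : ℂ) + 1 - 1 / (p : ℂ) + t * Complex.I)}
  rw [hrange] at hcl
  rw [← hspec]
  refine Eq.trans ?_ hcl
  apply Subset.antisymm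
  · intro l hl
    by_cases hl0 : l = 0
    · rw [hl0]
      exact zero_mem_closure
    · obtain ⟨t, ht⟩ := spectrum_subset norm_lpShift_le lpShift_zero lpShift_add
        (continuous_lpShift hq) hk S hSk l hl hl0
      exact subset_closure ⟨t, ht.symm⟩
  · refine closure_minimal ?_ (spectrum.isClosed S)
    rintro _ ⟨t, rfl⟩
    obtain ⟨v, hv, hlim⟩ := exists_approx (q := ENNReal.ofReal p) hq t
    exact mem_spectrum_of_approx norm_lpShift_le (continuous_lpShift hq) hk S hSk t v hv hlim
end

section
/- Let 1 ≤ p < ∞ and let n ≥ 1 be an integer. There exists a constant C = C(n,p) > 0 such that for every Schwartz function f : ℝ → ℂ, ‖f‖_{L^p(ℝ)} ≤ C · (∫_ℝ |t|^{np} |f^{(n)}(t)|^p dt)^{1/p}. (This is the embedding 𝒯_p^{(n)}(|t|^n) ↪ L^p(ℝ).) -/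
open MeasureTheory Set

/-!
The estimate follows by iterating the weighted Hardy inequality
`‖x^k g‖_p ≤ C ‖x^(k+1) g'‖_p` (`hardy_step`), whose constant `C = (1 - 2^(-1/p))⁻¹` does not
depend on `k`.

The Hardy inequality is obtained from a dilation argument. By the triangle inequality,
`‖x^k g(x)‖_p ≤ ‖x^k (g(2x) - g(x))‖_p + ‖x^k g(2x)‖_p`. The last term is
`2^(-k-1/p) ‖x^k g‖_p ≤ 2^(-1/p) ‖x^k g‖_p`, which can be absorbed in the left-hand side since
`‖x^k g‖_p` is finite for a Schwartz function. For the first term,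
`g(2x) - g(x) = ∫_1^2 x g'(sx) ds`, so Jensen's inequality on `(1, 2]`, Tonelli's theorem and the
substitution `y = sx` bound it by `‖x^(k+1) g'‖_p` (`eLpNorm_dilation_sub_le`).
This treats all `p ≥ 1` and both half-lines at once, and needs no derivative of `|g|^p`.
-/

lemma hasTemperateGrowth_pow (k : ℕ) : (fun x : ℝ => x ^ k).HasTemperateGrowth := by
  induction k with
  | zero => simp
  | succ k ih =>
    simp only [pow_succ]
    exact ih.mul Function.HasTemperateGrowth.id'

lemma memLp_pow_smul (k : ℕ) (g : SchwartzMap ℝ ℂ) (q : ENNReal) :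
    MemLp (fun x : ℝ => x ^ k • g x) q volume := by
  have h := (SchwartzMap.smulLeftCLM ℂ (fun x : ℝ => x ^ k) g).memLp q volume
  rwa [SchwartzMap.smulLeftCLM_apply (hasTemperateGrowth_pow k)] at h

lemma lintegral_comp_dilation (F : ℝ → ENNReal) (hF : Measurable F) {a : ℝ} (ha : 0 < a) :
    ∫⁻ x, F (a * x) = ENNReal.ofReal a⁻¹ * ∫⁻ x, F x := by
  rw [← lintegral_map hF (measurable_const_mul a), Real.map_volume_mul_left ha.ne',
    lintegral_smul_measure, abs_of_pos (inv_pos.2 ha), smul_eq_mul]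

/-- The fundamental theorem of calculus and Jensen's inequality on `(1, 2]`. The weight
`x ^ (k + 1)` is replaced by the larger `(s * x) ^ (k + 1)`, so that the right-hand side depends
on `s * x` only. -/
lemma enorm_dilation_sub_rpow_le {p : ℝ} (hp : 1 ≤ p) (k : ℕ) (g : SchwartzMap ℝ ℂ) (x : ℝ) :
    ‖x ^ k • (g (2 * x) - g x)‖ₑ ^ p ≤
      ∫⁻ s in Ioc (1 : ℝ) 2, ‖(s * x) ^ (k + 1) • deriv g (s * x)‖ₑ ^ p := by
  have hp0 : 0 < p := by linarith
  have hdc : Continuous (deriv g) := (SchwartzMap.derivCLM ℝ ℂ g).continuous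
  have hcont : Continuous (fun s : ℝ => x • deriv g (s * x)) := by fun_prop
  have hftc : ∫ s in (1 : ℝ)..2, x • deriv g (s * x) = g (2 * x) - g x := by
    have h := intervalIntegral.integral_eq_sub_of_hasDerivAt (a := (1 : ℝ)) (b := 2)
      (f := fun s : ℝ => g (s * x)) (f' := fun s : ℝ => x • deriv g (s * x))
      (fun s _ => by
        have h1 : HasDerivAt (fun s : ℝ => s * x) x s := by
          simpa using (hasDerivAt_id s).mul_const x
        exact HasDerivAt.scomp s (g.differentiable.differentiableAt.hasDerivAt) h1)
      (hcont.intervalIntegrable _ _)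
    simpa using h
  have : IsProbabilityMeasure (volume.restrict (Ioc (1 : ℝ) 2)) :=
    ⟨by rw [Measure.restrict_apply_univ, Real.volume_Ioc]; norm_num⟩
  have hle : ‖x ^ k • (g (2 * x) - g x)‖ₑ ≤
      eLpNorm (fun s : ℝ => x ^ (k + 1) • deriv g (s * x)) 1 (volume.restrict (Ioc (1 : ℝ) 2)) := by
    rw [← hftc, ← intervalIntegral.integral_smul, intervalIntegral.integral_of_le (by norm_num),
      eLpNorm_one_eq_lintegral_enorm]
    refine (enorm_integral_le_lintegral_enorm _).trans (le_of_eq ?_)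
    simp only [smul_smul, pow_succ]
  have hjensen := hle.trans (eLpNorm_le_eLpNorm_of_exponent_le
    (show (1 : ENNReal) ≤ ENNReal.ofReal p by simpa using hp)
    (Continuous.aestronglyMeasurable (by fun_prop)))
  rw [eLpNorm_eq_lintegral_rpow_enorm_toReal (by simpa using hp0) ENNReal.ofReal_ne_top,
    ENNReal.toReal_ofReal hp0.le, one_div, ENNReal.le_rpow_inv_iff hp0] at hjensen
  refine hjensen.trans (setLIntegral_mono' measurableSet_Ioc fun s hs => ?_)
  gcongr ?_ ^ p
  rw [enorm_smul, enorm_smul]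
  gcongr
  rw [enorm_le_iff_norm_le, norm_pow, norm_pow, norm_mul]
  gcongr
  refine le_mul_of_one_le_left (norm_nonneg _) ?_
  rw [Real.norm_eq_abs, abs_of_pos (by linarith [hs.1])]
  exact hs.1.le

lemma eLpNorm_dilation_sub_le {p : ℝ} (hp : 1 ≤ p) (k : ℕ) (g : SchwartzMap ℝ ℂ) :
    eLpNorm (fun x : ℝ => x ^ k • (g (2 * x) - g x)) (ENNReal.ofReal p) ≤
      eLpNorm (fun x : ℝ => x ^ (k + 1) • deriv g x) (ENNReal.ofReal p) := by
  have hp0 : 0 < p := by linarith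
  have hdc : Continuous (deriv g) := (SchwartzMap.derivCLM ℝ ℂ g).continuous
  rw [eLpNorm_eq_lintegral_rpow_enorm_toReal (by simpa using hp0) ENNReal.ofReal_ne_top,
    eLpNorm_eq_lintegral_rpow_enorm_toReal (by simpa using hp0) ENNReal.ofReal_ne_top,
    ENNReal.toReal_ofReal hp0.le]
  gcongr ?_ ^ _
  set F : ℝ → ENNReal := fun y => ‖y ^ (k + 1) • deriv g y‖ₑ ^ p with hF
  have hFm : Measurable F := by
    have : Continuous fun y : ℝ => y ^ (k + 1) • deriv g y := by fun_prop
    exact this.measurable.enorm.pow_const p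
  calc ∫⁻ x : ℝ, ‖x ^ k • (g (2 * x) - g x)‖ₑ ^ p
      ≤ ∫⁻ x : ℝ, ∫⁻ s in Ioc (1 : ℝ) 2, F (s * x) :=
        lintegral_mono fun x => enorm_dilation_sub_rpow_le hp k g x
    _ = ∫⁻ s in Ioc (1 : ℝ) 2, ∫⁻ x : ℝ, F (s * x) :=
        lintegral_lintegral_swap
          (hFm.comp (measurable_snd.mul measurable_fst)).aemeasurable
    _ ≤ ∫⁻ s in Ioc (1 : ℝ) 2, ∫⁻ x : ℝ, F x := by
        refine setLIntegral_mono' measurableSet_Ioc fun s hs => ?_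
        rw [lintegral_comp_dilation F hFm (by linarith [hs.1])]
        refine mul_le_of_le_one_left' ?_
        rw [ENNReal.ofReal_le_one]
        exact inv_le_one_of_one_le₀ hs.1.le
    _ = ∫⁻ x : ℝ, F x := by
        rw [setLIntegral_const, Real.volume_Ioc]
        norm_num

lemma eLpNorm_pow_smul_dilation_le {p : ℝ} (hp : 1 ≤ p) (k : ℕ) (g : SchwartzMap ℝ ℂ) :
    eLpNorm (fun x : ℝ => x ^ k • g (2 * x)) (ENNReal.ofReal p) ≤
      ENNReal.ofReal (2⁻¹ ^ (1 / p)) *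
        eLpNorm (fun x : ℝ => x ^ k • g x) (ENNReal.ofReal p) := by
  have hp0 : 0 < p := by linarith
  rw [eLpNorm_eq_lintegral_rpow_enorm_toReal (by simpa using hp0) ENNReal.ofReal_ne_top,
    eLpNorm_eq_lintegral_rpow_enorm_toReal (by simpa using hp0) ENNReal.ofReal_ne_top,
    ENNReal.toReal_ofReal hp0.le, ← ENNReal.ofReal_rpow_of_nonneg (by norm_num) (by positivity),
    ← ENNReal.mul_rpow_of_nonneg _ _ (by positivity)]
  gcongr ?_ ^ _
  have hFm : Measurable fun y : ℝ => ‖y ^ k • g y‖ₑ ^ p := by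
    have : Continuous fun y : ℝ => y ^ k • g y := by have := g.continuous; fun_prop
    exact this.measurable.enorm.pow_const p
  rw [← lintegral_comp_dilation _ hFm (by norm_num : (0 : ℝ) < 2)]
  refine lintegral_mono fun x => ?_
  dsimp only
  gcongr ?_ ^ p
  rw [enorm_smul, enorm_smul]
  gcongr
  rw [enorm_le_iff_norm_le, norm_pow, norm_pow, norm_mul]
  gcongr
  exact le_mul_of_one_le_left (norm_nonneg _) (by norm_num)

/-- The weighted Hardy inequality, with a constant independent of the weight. -/
lemma hardy_step {p : ℝ} (hp : 1 ≤ p) (k : ℕ) (g : SchwartzMap ℝ ℂ) :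
    (eLpNorm (fun x : ℝ => x ^ k • g x) (ENNReal.ofReal p)).toReal ≤
      (1 - (2⁻¹ : ℝ) ^ (1 / p))⁻¹ *
        (eLpNorm (fun x : ℝ => x ^ (k + 1) • deriv g x) (ENNReal.ofReal p)).toReal := by
  have hp0 : 0 < p := by linarith
  have hgc := g.continuous
  have hc1 : (2⁻¹ : ℝ) ^ (1 / p) < 1 :=
    Real.rpow_lt_one (by norm_num) (by norm_num) (by positivity)
  have hA := (memLp_pow_smul k g (ENNReal.ofReal p)).eLpNorm_ne_top
  have hB : eLpNorm (fun x : ℝ => x ^ (k + 1) • deriv g x) (ENNReal.ofReal p) ≠ ⊤ :=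
    (memLp_pow_smul (k + 1) (SchwartzMap.derivCLM ℝ ℂ g) (ENNReal.ofReal p)).eLpNorm_ne_top
  have hpow : Continuous fun x : ℝ => x ^ k := continuous_pow k
  have hg2 : Continuous fun x : ℝ => g (2 * x) := hgc.comp (continuous_const_mul 2)
  have hdil : Continuous fun x : ℝ => x ^ k • g (2 * x) := hpow.smul hg2
  have hsub : Continuous fun x : ℝ => x ^ k • (g (2 * x) - g x) := hpow.smul (hg2.sub hgc)
  have htri : eLpNorm (fun x : ℝ => x ^ k • g x) (ENNReal.ofReal p) ≤
      ENNReal.ofReal (2⁻¹ ^ (1 / p)) * eLpNorm (fun x : ℝ => x ^ k • g x) (ENNReal.ofReal p) +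
      eLpNorm (fun x : ℝ => x ^ (k + 1) • deriv g x) (ENNReal.ofReal p) := by
    have heq : (fun x : ℝ => x ^ k • g x) =
        (fun x : ℝ => x ^ k • g (2 * x)) - fun x : ℝ => x ^ k • (g (2 * x) - g x) := by
      ext x
      simp [mul_sub]
    have hle : eLpNorm (fun x : ℝ => x ^ k • g x) (ENNReal.ofReal p) ≤
        eLpNorm (fun x : ℝ => x ^ k • g (2 * x)) (ENNReal.ofReal p) +
          eLpNorm (fun x : ℝ => x ^ k • (g (2 * x) - g x)) (ENNReal.ofReal p) := by
      conv_lhs => rw [heq]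
      exact eLpNorm_sub_le hdil.aestronglyMeasurable hsub.aestronglyMeasurable
        (by simpa using hp)
    have h1 := eLpNorm_pow_smul_dilation_le hp k g
    have h2 := eLpNorm_dilation_sub_le hp k g
    exact hle.trans (add_le_add h1 h2)
  have hcA : ENNReal.ofReal (2⁻¹ ^ (1 / p)) *
      eLpNorm (fun x : ℝ => x ^ k • g x) (ENNReal.ofReal p) ≠ ⊤ :=
    ENNReal.mul_ne_top ENNReal.ofReal_ne_top hA
  have hreal := ENNReal.toReal_mono (ENNReal.add_ne_top.2 ⟨hcA, hB⟩) htri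
  rw [ENNReal.toReal_add hcA hB, ENNReal.toReal_mul,
    ENNReal.toReal_ofReal (by positivity)] at hreal
  rw [inv_mul_eq_div, le_div_iff₀ (by linarith)]
  linarith

lemma hardy_iterate {p : ℝ} (hp : 1 ≤ p) (n : ℕ) : ∀ (k : ℕ) (g : SchwartzMap ℝ ℂ),
    (eLpNorm (fun x : ℝ => x ^ k • g x) (ENNReal.ofReal p)).toReal ≤
      ((1 - (2⁻¹ : ℝ) ^ (1 / p))⁻¹) ^ n *
        (eLpNorm (fun x : ℝ => x ^ (k + n) • iteratedDeriv n g x) (ENNReal.ofReal p)).toReal := by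
  have hc1 : (2⁻¹ : ℝ) ^ (1 / p) < 1 :=
    Real.rpow_lt_one (by norm_num) (by norm_num) (by positivity)
  have hC : 0 < (1 - (2⁻¹ : ℝ) ^ (1 / p))⁻¹ := inv_pos.2 (by linarith)
  induction n with
  | zero => intro k g; simp
  | succ n ih =>
    intro k g
    refine (hardy_step hp k g).trans ?_
    rw [pow_succ', mul_assoc, iteratedDeriv_succ', show k + (n + 1) = k + 1 + n by ring]
    gcongr
    exact ih (k + 1) (SchwartzMap.derivCLM ℝ ℂ g)

lemma exists_schwartz_iteratedDeriv (n : ℕ) : ∀ g : SchwartzMap ℝ ℂ,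
    ∃ h : SchwartzMap ℝ ℂ, ⇑h = iteratedDeriv n g := by
  induction n with
  | zero => exact fun g => ⟨g, by simp⟩
  | succ n ih =>
    intro g
    obtain ⟨h, hh⟩ := ih (SchwartzMap.derivCLM ℝ ℂ g)
    exact ⟨h, by rw [hh, iteratedDeriv_succ']; rfl⟩

/-- The embedding `𝒯_p^{(n)}(|t|^n) ↪ L^p(ℝ)` on Schwartz functions:
`‖f‖_{L^p} ≤ C (∫ |t|^{np} |f⁽ⁿ⁾(t)|^p dt)^{1/p}`. -/
theorem sobolev_embeds_in_Lp
    (p : ℝ) (hp : 1 ≤ p) (n : ℕ) (hn : 1 ≤ n) :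
    ∃ C : ℝ, 0 < C ∧ ∀ f : SchwartzMap ℝ ℂ,
      (∫ x : ℝ, ‖f x‖ ^ p) ^ (1 / p) ≤
        C * (∫ t : ℝ, |t| ^ ((n : ℝ) * p) * ‖iteratedDeriv n (⇑f) t‖ ^ p) ^ (1 / p) := by
  have hp0 : 0 < p := by linarith
  have hc1 : (2⁻¹ : ℝ) ^ (1 / p) < 1 :=
    Real.rpow_lt_one (by norm_num) (by norm_num) (by positivity)
  have hC : 0 < (1 - (2⁻¹ : ℝ) ^ (1 / p))⁻¹ := inv_pos.2 (by linarith)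
  refine ⟨((1 - (2⁻¹ : ℝ) ^ (1 / p))⁻¹) ^ n, by positivity, fun f => ?_⟩
  have key : ∀ u : ℝ → ℂ, MemLp u (ENNReal.ofReal p) volume →
      (eLpNorm u (ENNReal.ofReal p)).toReal = (∫ x, ‖u x‖ ^ p) ^ (1 / p) := fun u hu => by
    rw [hu.eLpNorm_eq_integral_rpow_norm (by simpa using hp0) ENNReal.ofReal_ne_top,
      ENNReal.toReal_ofReal hp0.le, ENNReal.toReal_ofReal (by positivity), one_div]
  have h := hardy_iterate hp n 0 f
  obtain ⟨d, hd⟩ := exists_schwartz_iteratedDeriv n f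
  rw [key _ (memLp_pow_smul 0 f _), ← hd, key _ (memLp_pow_smul (0 + n) d _)] at h
  rw [← hd]
  convert h using 3
  · simp
  · congr 1
    ext t
    rw [norm_smul, Real.mul_rpow (norm_nonneg _) (norm_nonneg _), norm_pow, Real.norm_eq_abs,
      zero_add, Real.rpow_mul (abs_nonneg _), Real.rpow_natCast]
end

section
/- Let 1 < p < ∞ and let n ≥ 1 be an integer. There exists a constant C = C(n,p) > 0 such that for all Schwartz functions f, g : ℝ → ℂ, (∫_ℝ |t|^{np} |(f ∗ g)^{(n)}(t)|^p dt)^{1/p} ≤ C · (∫_ℝ |t|^{np} |f^{(n)}(t)|^p dt)^{1/p} · (∫_ℝ |t|^{n} |g^{(n)}(t)| dt), where (f ∗ g)(t) = ∫_ℝ f(t−s) g(s) ds. (This says the Sobolev space 𝒯_p^{(n)}(|t|^n) is a convolution module over the algebra 𝒯_1^{(n)}(|t|^n).) -/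
/-!
Differentiating under the integral gives `(f ∗ g)^{(n)}(t) = ∫ f^{(n)}(t - s) g(s) ds`. For `t ≠ 0`
this integral is cut at `c = t/2`. Where `s` lies on the same side of `c` as `0`, one has
`|t| ≤ 2|t - s|`, so the weight `|t|^n` can be absorbed by `f^{(n)}(t - s)`. On the other half-line
`|t| ≤ 2|s|`, and `n` integrations by parts move all derivatives onto `g`, where the weight is
absorbed by `g^{(n)}(s)`; they leave boundary terms `f^{(j)}(c) g^{(k)}(c)` with `j + k = n - 1`.
This is the pointwise bound `weighted_convolution_le`.

The two integral terms are convolutions, estimated by Young's inequality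
`‖a ∗ b‖_p ≤ ‖a‖_p ‖b‖_1` (`young_lintegral`). In the boundary terms, `|c|^{k+1} |g^{(k)}(c)|` is
bounded uniformly by `∫ |s|^n |g^{(n)}(s)| ds` (`pow_succ_mul_deriv_le`), and
`|c|^j |f^{(j)}(c)|` is measured in `L^p`. Every lower-order norm `‖|t|^k f^{(k)}‖_p` that appears
is controlled by the one with `k = n` through Hardy's inequality (`hardy_step`, `hardy_iterate`),
which holds for all `p ≥ 1` and so also serves for `g` with `p = 1`.

The estimates are carried out for lower Lebesgue integrals of `ℝ≥0∞`-valued functions, where no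
integrability needs to be tracked; Schwartz decay is used at the end to identify the integrals on
the right-hand side with Bochner integrals.
-/

open MeasureTheory Set
open scoped ENNReal
open Filter Topology

/-! ### Jensen, Young and scaling for lower Lebesgue integrals -/

/-- Jensen's inequality for `x ↦ x ^ p` and the measure with density `ρ`, not normalized. -/
lemma jensen_lintegral {α : Type*} [MeasurableSpace α] {μ : Measure α} {p : ℝ} (hp : 1 ≤ p)
    {φ ρ : α → ℝ≥0∞} (hφ : Measurable φ) (hρ : Measurable ρ) :
    (∫⁻ x, φ x * ρ x ∂μ) ^ p ≤ (∫⁻ x, ρ x ∂μ) ^ (p - 1) * ∫⁻ x, φ x ^ p * ρ x ∂μ := by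
  have hp0 : 0 < p := by linarith
  have key := eLpNorm'_le_eLpNorm'_mul_rpow_measure_univ (μ := μ.withDensity ρ) one_pos hp
    hφ.aestronglyMeasurable
  simp only [eLpNorm'_eq_lintegral_enorm, enorm_eq_self, ENNReal.rpow_one, div_one,
    withDensity_apply _ MeasurableSet.univ, Measure.restrict_univ] at key
  rw [lintegral_withDensity_eq_lintegral_mul _ hρ hφ,
    lintegral_withDensity_eq_lintegral_mul _ hρ (hφ.pow_const p)] at key
  simp only [Pi.mul_apply, mul_comm (ρ _)] at key
  refine (ENNReal.rpow_le_rpow key hp0.le).trans_eq ?_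
  rw [ENNReal.mul_rpow_of_nonneg _ _ hp0.le, ← ENNReal.rpow_mul, ← ENNReal.rpow_mul, mul_comm]
  congr 2
  · field_simp
  · rw [one_div_mul_cancel hp0.ne', ENNReal.rpow_one]

lemma lintegral_comp_mul_right_pos {φ : ℝ → ℝ≥0∞} (hφ : Measurable φ) {u : ℝ} (hu : 0 < u) :
    ∫⁻ t, φ (t * u) = ENNReal.ofReal u⁻¹ * ∫⁻ t, φ t := by
  rw [← lintegral_map (μ := volume) (g := fun t => t * u) hφ (by fun_prop),
    Real.map_volume_mul_right hu.ne', lintegral_smul_measure, abs_of_pos (inv_pos.2 hu), smul_eq_mul]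

lemma rpow_sub_one_mul_self {p : ℝ} (hp : 1 ≤ p) (x : ℝ≥0∞) : x ^ (p - 1) * x = x ^ p := by
  conv_lhs => rw [← ENNReal.rpow_one x, ← ENNReal.rpow_mul, one_mul,
    ← ENNReal.rpow_add_of_nonneg _ _ (by linarith) zero_le_one]
  simp

/-- Young's inequality `‖a ∗ b‖_p ≤ ‖a‖_p ‖b‖_1`, raised to the power `p`. -/
lemma young_lintegral {p : ℝ} (hp : 1 ≤ p) {a b : ℝ → ℝ≥0∞} (ha : Measurable a)
    (hb : Measurable b) :
    ∫⁻ t, (∫⁻ s, a (t - s) * b s) ^ p ≤ (∫⁻ t, a t ^ p) * (∫⁻ s, b s) ^ p := by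
  calc ∫⁻ t, (∫⁻ s, a (t - s) * b s) ^ p
      ≤ ∫⁻ t, (∫⁻ s, b s) ^ (p - 1) * ∫⁻ s, a (t - s) ^ p * b s :=
        lintegral_mono fun t => jensen_lintegral hp (by fun_prop) hb
    _ = (∫⁻ s, b s) ^ (p - 1) * ∫⁻ s, ∫⁻ t, a (t - s) ^ p * b s := by
        rw [lintegral_const_mul _ (by fun_prop), lintegral_lintegral_swap (by fun_prop)]
    _ = (∫⁻ s, b s) ^ (p - 1) * ∫⁻ s, (∫⁻ t, a t ^ p) * b s := by
        congr 1
        refine lintegral_congr fun s => ?_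
        rw [lintegral_mul_const _ (by fun_prop), lintegral_sub_right_eq_self (fun t => a t ^ p)]
    _ = _ := by
        rw [lintegral_const_mul _ hb, mul_left_comm, rpow_sub_one_mul_self hp]

/-! ### Schwartz functions: derivatives, convolution, integration by parts -/

lemma norm_setIntegral_halfLine {φ φ' : ℝ → ℂ} (hd : ∀ x, HasDerivAt φ (φ' x) x)
    (hi : Integrable φ') (h0 : Tendsto φ (cocompact ℝ) (𝓝 0)) {c : ℝ} {S : Set ℝ}
    (hS : S = Ioi c ∨ S = Iic c) : ‖∫ s in S, φ' s‖ = ‖φ c‖ := by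
  rcases hS with rfl | rfl
  · rw [integral_Ioi_of_hasDerivAt_of_tendsto' (fun x _ => hd x) hi.integrableOn
      (h0.mono_left atTop_le_cocompact)]
    simp
  · rw [integral_Iic_of_hasDerivAt_of_tendsto' (fun x _ => hd x) hi.integrableOn
      (h0.mono_left atBot_le_cocompact)]
    simp

/-- The `k`-th derivative of a Schwartz function, as a Schwartz function. -/
noncomputable def schwartzDeriv (k : ℕ) (f : SchwartzMap ℝ ℂ) : SchwartzMap ℝ ℂ :=
  (SchwartzMap.derivCLM ℂ ℂ)^[k] f

lemma coe_schwartzDeriv (k : ℕ) (f : SchwartzMap ℝ ℂ) :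
    ⇑(schwartzDeriv k f) = iteratedDeriv k f := by
  induction k with
  | zero => simp [schwartzDeriv]
  | succ k ih =>
    rw [iteratedDeriv_succ, ← ih]
    ext x
    rw [schwartzDeriv, Function.iterate_succ_apply', SchwartzMap.derivCLM_apply]
    rfl

lemma schwartzDeriv_zero (f : SchwartzMap ℝ ℂ) : schwartzDeriv 0 f = f := rfl

lemma hasDerivAt_schwartzDeriv (k : ℕ) (f : SchwartzMap ℝ ℂ) (x : ℝ) :
    HasDerivAt (schwartzDeriv k f) (schwartzDeriv (k + 1) f x) x := by
  have := (schwartzDeriv k f).hasDerivAt x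
  have e : schwartzDeriv (k + 1) f = SchwartzMap.derivCLM ℂ ℂ (schwartzDeriv k f) :=
    Function.iterate_succ_apply' _ _ _
  rwa [e, SchwartzMap.derivCLM_apply]

lemma integrable_translate_mul (f g : SchwartzMap ℝ ℂ) (t : ℝ) :
    Integrable (fun s => f (t - s) * g s) := by
  refine g.integrable.bdd_mul (c := SchwartzMap.seminorm ℝ 0 0 f) ?_ ?_
  · exact (f.continuous.comp (by fun_prop)).aestronglyMeasurable
  · exact Eventually.of_forall fun s => f.norm_le_seminorm ℝ _

lemma schwartz_tendsto (f : SchwartzMap ℝ ℂ) : Tendsto f (cocompact ℝ) (𝓝 0) :=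
  f.toZeroAtInfty.zero_at_infty'

lemma iteratedDeriv_convolution (n : ℕ) (f g : SchwartzMap ℝ ℂ) (m : ℕ) :
    iteratedDeriv n (fun x => ∫ s : ℝ, schwartzDeriv m f (x - s) * g s) =
      fun x => ∫ s : ℝ, schwartzDeriv (m + n) f (x - s) * g s := by
  induction n generalizing m with
  | zero => simp
  | succ n ih =>
    rw [iteratedDeriv_succ']
    have : deriv (fun x => ∫ s : ℝ, schwartzDeriv m f (x - s) * g s) =
        fun x => ∫ s : ℝ, schwartzDeriv (m + 1) f (x - s) * g s := by
      ext x
      refine HasDerivAt.deriv ?_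
      refine (hasDerivAt_integral_of_dominated_loc_of_deriv_le (s := univ)
        (F := fun x s => schwartzDeriv m f (x - s) * g s)
        (F' := fun x s => schwartzDeriv (m + 1) f (x - s) * g s)
        (bound := fun s => SchwartzMap.seminorm ℝ 0 0 (schwartzDeriv (m + 1) f) * ‖g s‖)
        univ_mem ?_ ?_ ?_ ?_ ?_ ?_).2
      · exact Eventually.of_forall fun x => (integrable_translate_mul _ _ x).1
      · exact integrable_translate_mul _ _ x
      · exact (integrable_translate_mul _ _ x).1
      · refine Eventually.of_forall fun s x _ => ?_
        rw [norm_mul]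
        gcongr
        exact (schwartzDeriv (m + 1) f).norm_le_seminorm ℝ _
      · exact g.integrable.norm.const_mul _
      · refine Eventually.of_forall fun s x _ => ?_
        exact ((hasDerivAt_schwartzDeriv m f (x - s)).comp_sub_const x s).mul_const _
    rw [this, ih, show m + 1 + n = m + (n + 1) by ring]

/-- One integration by parts on a half-line with endpoint `c`; a triangle inequality for norms is
enough here and makes the two orientations of the half-line indistinguishable. -/
lemma norm_setIntegral_parts (f g : SchwartzMap ℝ ℂ) (j k : ℕ) (t : ℝ) {c : ℝ} {S : Set ℝ}
    (hS : S = Ioi c ∨ S = Iic c) :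
    ‖∫ s in S, schwartzDeriv (j + 1) f (t - s) * schwartzDeriv k g s‖ ≤
      ‖∫ s in S, schwartzDeriv j f (t - s) * schwartzDeriv (k + 1) g s‖ +
        ‖schwartzDeriv j f (t - c)‖ * ‖schwartzDeriv k g c‖ := by
  have hi1 := integrable_translate_mul (schwartzDeriv (j + 1) f) (schwartzDeriv k g) t
  have hi2 := integrable_translate_mul (schwartzDeriv j f) (schwartzDeriv (k + 1) g) t
  have hd : ∀ s, HasDerivAt (fun s => schwartzDeriv j f (t - s) * schwartzDeriv k g s)
      (schwartzDeriv j f (t - s) * schwartzDeriv (k + 1) g s -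
        schwartzDeriv (j + 1) f (t - s) * schwartzDeriv k g s) s := by
    intro s
    have := ((hasDerivAt_schwartzDeriv j f (t - s)).comp_const_sub t s).mul
      (hasDerivAt_schwartzDeriv k g s)
    refine this.congr_deriv ?_
    ring
  have h0 : Tendsto (fun s => schwartzDeriv j f (t - s) * schwartzDeriv k g s)
      (cocompact ℝ) (𝓝 0) := by
    have h1 := schwartz_tendsto (schwartzDeriv k g)
    refine squeeze_zero_norm (a := fun s => SchwartzMap.seminorm ℝ 0 0 (schwartzDeriv j f) *
      ‖schwartzDeriv k g s‖) (fun s => ?_) ?_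
    · rw [norm_mul]
      gcongr
      exact (schwartzDeriv j f).norm_le_seminorm ℝ _
    · simpa using h1.norm.const_mul (SchwartzMap.seminorm ℝ 0 0 (schwartzDeriv j f))
  have key := norm_setIntegral_halfLine hd (hi2.sub hi1) h0 hS
  rw [integral_sub hi2.integrableOn hi1.integrableOn, norm_mul] at key
  rw [← key]
  exact norm_le_norm_add_norm_sub _ _

lemma norm_setIntegral_parts_iterate (f g : SchwartzMap ℝ ℂ) (m k : ℕ) (t : ℝ) {c : ℝ}
    {S : Set ℝ} (hS : S = Ioi c ∨ S = Iic c) :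
    ‖∫ s in S, schwartzDeriv m f (t - s) * schwartzDeriv k g s‖ ≤
      ‖∫ s in S, f (t - s) * schwartzDeriv (k + m) g s‖ +
        ∑ j ∈ Finset.range m,
          ‖schwartzDeriv (m - 1 - j) f (t - c)‖ * ‖schwartzDeriv (k + j) g c‖ := by
  induction m generalizing k with
  | zero => simp [schwartzDeriv_zero]
  | succ m ih =>
    refine (norm_setIntegral_parts f g m k t hS).trans ?_
    refine (add_le_add_left (ih (k + 1)) _).trans_eq ?_
    rw [Finset.sum_range_succ', add_assoc, show k + 1 + m = k + (m + 1) by ring]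
    congr 2
    refine Finset.sum_congr rfl fun j _ => ?_
    rw [show k + 1 + j = k + (j + 1) by ring, show m + 1 - 1 - (j + 1) = m - 1 - j by omega]

/-! ### Hardy's inequality -/

/-- `|t|^k |f^{(k)}(t)|` as an extended nonnegative real. -/
noncomputable def weightedDeriv (k : ℕ) (f : SchwartzMap ℝ ℂ) (t : ℝ) : ℝ≥0∞ :=
  ‖t‖ₑ ^ k * ‖schwartzDeriv k f t‖ₑ

@[fun_prop]
lemma measurable_weightedDeriv (k : ℕ) (f : SchwartzMap ℝ ℂ) : Measurable (weightedDeriv k f) := by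
  have := (schwartzDeriv k f).continuous.measurable
  unfold weightedDeriv
  fun_prop

/-- `f^{(k)}` is recovered from `f^{(k+1)}` along the ray from `t` away from the origin,
parametrized as `u ↦ t u`, `u > 1`, which treats both signs of `t` at once. -/
lemma weightedDeriv_le_tail (k : ℕ) (f : SchwartzMap ℝ ℂ) {t : ℝ} (ht : t ≠ 0) :
    weightedDeriv k f t ≤
      ∫⁻ u in Ioi (1 : ℝ), weightedDeriv (k + 1) f (t * u) * ENNReal.ofReal u⁻¹ := by
  have hd : ∀ u, HasDerivAt (fun u => schwartzDeriv k f (t * u))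
      (t * schwartzDeriv (k + 1) f (t * u)) u := fun u => by
    have := (hasDerivAt_schwartzDeriv k f (t * u)).scomp u ((hasDerivAt_id u).const_mul t)
    simpa [Function.comp_def] using this
  have hi : Integrable (fun u => t * schwartzDeriv (k + 1) f (t * u)) :=
    ((schwartzDeriv (k + 1) f).integrable.comp_mul_left' ht).const_mul _
  have h0 : Tendsto (fun u => schwartzDeriv k f (t * u)) (cocompact ℝ) (𝓝 0) :=
    (schwartz_tendsto (schwartzDeriv k f)).comp
      (Homeomorph.mulLeft₀ t ht).isClosedEmbedding.tendsto_cocompact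
  have key := norm_setIntegral_halfLine hd hi h0 (c := 1) (Or.inl rfl)
  have key' : ‖schwartzDeriv k f t‖ₑ ≤
      ∫⁻ u in Ioi (1 : ℝ), ‖t‖ₑ * ‖schwartzDeriv (k + 1) f (t * u)‖ₑ := by
    rw [mul_one] at key
    rw [← enorm_norm, ← key, enorm_norm]
    refine (enorm_integral_le_lintegral_enorm _).trans_eq ?_
    have ht' : ‖(t : ℂ)‖ₑ = ‖t‖ₑ := by rw [← enorm_norm (t : ℂ), Complex.norm_real, enorm_norm]
    simp only [enorm_mul, ht']
  have hm := (schwartzDeriv (k + 1) f).continuous.measurable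
  calc weightedDeriv k f t ≤ ‖t‖ₑ ^ k *
        ∫⁻ u in Ioi (1 : ℝ), ‖t‖ₑ * ‖schwartzDeriv (k + 1) f (t * u)‖ₑ := by
        unfold weightedDeriv; gcongr
    _ = ∫⁻ u in Ioi (1 : ℝ), ‖t‖ₑ ^ k * (‖t‖ₑ * ‖schwartzDeriv (k + 1) f (t * u)‖ₑ) := by
        rw [← lintegral_const_mul _ (by fun_prop)]
    _ ≤ _ := by
        refine setLIntegral_mono (by fun_prop) fun u (hu : 1 < u) => ?_
        have hu0 : 0 < u := by linarith
        have hone : 1 ≤ ‖u‖ₑ ^ k := by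
          apply one_le_pow₀
          rw [Real.enorm_of_nonneg hu0.le]
          simpa using hu.le
        have hinv : ‖u‖ₑ * ENNReal.ofReal u⁻¹ = 1 := by
          rw [Real.enorm_of_nonneg hu0.le, ← ENNReal.ofReal_mul hu0.le, mul_inv_cancel₀ hu0.ne',
            ENNReal.ofReal_one]
        calc ‖t‖ₑ ^ k * (‖t‖ₑ * ‖schwartzDeriv (k + 1) f (t * u)‖ₑ)
            = ‖t‖ₑ ^ k * (‖t‖ₑ * ‖schwartzDeriv (k + 1) f (t * u)‖ₑ) * 1 := by ring
          _ ≤ ‖t‖ₑ ^ k * (‖t‖ₑ * ‖schwartzDeriv (k + 1) f (t * u)‖ₑ) * (‖u‖ₑ ^ k) := by gcongr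
          _ = ‖t‖ₑ ^ k * (‖t‖ₑ * ‖schwartzDeriv (k + 1) f (t * u)‖ₑ) * ‖u‖ₑ ^ k *
                (‖u‖ₑ * ENNReal.ofReal u⁻¹) := by rw [hinv, mul_one]
          _ = _ := by rw [weightedDeriv, enorm_mul]; ring

lemma lintegral_hardy_density {p : ℝ} (hp : 1 ≤ p) :
    ∫⁻ u in Ioi (1 : ℝ), ENNReal.ofReal (u ^ (-1 - 1 / p)) = ENNReal.ofReal p := by
  have hp0 : 0 < p := by linarith
  have h : -1 - 1 / p < -1 := by have : 0 < 1 / p := by positivity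
                                 linarith
  rw [← ofReal_integral_eq_lintegral_ofReal (integrableOn_Ioi_rpow_of_lt h one_pos),
    integral_Ioi_rpow_of_lt h one_pos]
  · congr 1
    rw [Real.one_rpow]
    field_simp
    ring
  · filter_upwards [ae_restrict_mem measurableSet_Ioi] with u hu
    exact Real.rpow_nonneg (zero_le_one.trans (le_of_lt hu)) _

/-- Hardy's inequality `‖|t|^k f^{(k)}‖_p ≤ p ‖|t|^{k+1} f^{(k+1)}‖_p`, raised to the power `p`.
It follows from Jensen's inequality with density `u^{-1-1/p}` on `(1, ∞)` (of mass `p`), applied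
along rays, and the scaling `t ↦ t u`. -/
lemma hardy_step_s15 {p : ℝ} (hp : 1 ≤ p) (k : ℕ) (f : SchwartzMap ℝ ℂ) :
    ∫⁻ t, weightedDeriv k f t ^ p ≤
      ENNReal.ofReal p ^ p * ∫⁻ t, weightedDeriv (k + 1) f t ^ p := by
  have hp0 : 0 < p := by linarith
  set w := weightedDeriv (k + 1) f with hw
  have hwm : Measurable w := measurable_weightedDeriv _ _
  have hpt : ∀ t : ℝ, t ≠ 0 → weightedDeriv k f t ^ p ≤ ENNReal.ofReal p ^ (p - 1) *
      ∫⁻ u in Ioi (1 : ℝ), w (t * u) ^ p * ENNReal.ofReal u *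
        ENNReal.ofReal (u ^ (-1 - 1 / p)) := by
    intro t ht
    have h1 : weightedDeriv k f t ≤ ∫⁻ u in Ioi (1 : ℝ),
        (w (t * u) * ENNReal.ofReal u ^ (1 / p)) * ENNReal.ofReal (u ^ (-1 - 1 / p)) := by
      refine (weightedDeriv_le_tail k f ht).trans_eq ?_
      refine setLIntegral_congr_fun measurableSet_Ioi fun u (hu : 1 < u) => ?_
      have hu0 : 0 < u := by linarith
      rw [mul_assoc, ENNReal.ofReal_rpow_of_pos hu0, ← ENNReal.ofReal_mul (by positivity),
        ← Real.rpow_add hu0, show 1 / p + (-1 - 1 / p) = -1 by ring, Real.rpow_neg_one]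
    refine (ENNReal.rpow_le_rpow h1 hp0.le).trans ?_
    refine (jensen_lintegral hp (by fun_prop) (by fun_prop)).trans_eq ?_
    rw [lintegral_hardy_density hp]
    congr 1
    refine lintegral_congr fun u => ?_
    rw [ENNReal.mul_rpow_of_nonneg _ _ hp0.le, ← ENNReal.rpow_mul, one_div_mul_cancel hp0.ne',
      ENNReal.rpow_one]
  calc ∫⁻ t, weightedDeriv k f t ^ p
      ≤ ∫⁻ t, ENNReal.ofReal p ^ (p - 1) *
          ∫⁻ u in Ioi (1 : ℝ), w (t * u) ^ p * ENNReal.ofReal u *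
            ENNReal.ofReal (u ^ (-1 - 1 / p)) := by
        refine lintegral_mono_ae ?_
        filter_upwards [Measure.ae_ne volume (0 : ℝ)] with t ht using hpt t ht
    _ = ENNReal.ofReal p ^ (p - 1) * ∫⁻ u in Ioi (1 : ℝ), ∫⁻ t, w (t * u) ^ p *
          ENNReal.ofReal u * ENNReal.ofReal (u ^ (-1 - 1 / p)) := by
        rw [lintegral_const_mul _ (by fun_prop), lintegral_lintegral_swap (by fun_prop)]
    _ = ENNReal.ofReal p ^ (p - 1) * ∫⁻ u in Ioi (1 : ℝ), (∫⁻ t, w t ^ p) *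
          ENNReal.ofReal (u ^ (-1 - 1 / p)) := by
        congr 1
        refine setLIntegral_congr_fun measurableSet_Ioi fun u (hu : 1 < u) => ?_
        have hu0 : 0 < u := by linarith
        rw [lintegral_mul_const _ (by fun_prop), lintegral_mul_const _ (by fun_prop),
          lintegral_comp_mul_right_pos (φ := fun t => w t ^ p) (by fun_prop) hu0]
        congr 1
        rw [mul_right_comm, ← ENNReal.ofReal_mul (by positivity), inv_mul_cancel₀ hu0.ne',
          ENNReal.ofReal_one, one_mul]
    _ = _ := by
        rw [lintegral_const_mul _ (by fun_prop), lintegral_hardy_density hp, mul_left_comm,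
          rpow_sub_one_mul_self hp, mul_comm]

lemma hardy_iterate_s15 {p : ℝ} (hp : 1 ≤ p) {k n : ℕ} (hkn : k ≤ n) (f : SchwartzMap ℝ ℂ) :
    ∫⁻ t, weightedDeriv k f t ^ p ≤
      (ENNReal.ofReal p ^ p) ^ n * ∫⁻ t, weightedDeriv n f t ^ p := by
  have hone : 1 ≤ ENNReal.ofReal p ^ p :=
    ENNReal.one_le_rpow (by simpa using hp) (by linarith)
  have h : ∀ m, ∫⁻ t, weightedDeriv k f t ^ p ≤
      (ENNReal.ofReal p ^ p) ^ m * ∫⁻ t, weightedDeriv (k + m) f t ^ p := by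
    intro m
    induction m with
    | zero => simp
    | succ m ih =>
      refine ih.trans ?_
      rw [pow_succ, mul_assoc]
      gcongr
      exact hardy_step_s15 hp (k + m) f
  obtain ⟨m, rfl⟩ := Nat.exists_eq_add_of_le hkn
  refine (h m).trans ?_
  gcongr ?_ * _
  exact pow_le_pow_right₀ hone (Nat.le_add_left m k)

/-- For `p = 1` the Hardy constant is `1`. -/
lemma hardy_iterate_one {k n : ℕ} (hkn : k ≤ n) (f : SchwartzMap ℝ ℂ) :
    ∫⁻ t, weightedDeriv k f t ≤ ∫⁻ t, weightedDeriv n f t := by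
  simpa using hardy_iterate_s15 le_rfl hkn f

/-! ### The pointwise bound and the module inequality -/

/-- The half-line `S` with endpoint `c` lying away from `0`. The last clause, for the complement,
is used with `2 * c = t`. -/
lemma exists_halfLine {c : ℝ} (hc : c ≠ 0) : ∃ S : Set ℝ, MeasurableSet S ∧
    (S = Ioi c ∨ S = Iic c) ∧ (∀ s ∈ S, |c| ≤ |s|) ∧ ∀ s ∉ S, |c| ≤ |2 * c - s| := by
  rcases lt_or_gt_of_ne hc with h | h
  · refine ⟨Iic c, measurableSet_Iic, Or.inr rfl, fun s hs => ?_, fun s hs => ?_⟩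
    · have : s ≤ c := hs
      rw [abs_of_neg h, abs_of_neg (by linarith)]; linarith
    · have : c < s := not_le.1 hs
      rw [abs_of_neg h, abs_of_neg (by linarith)]; linarith
  · refine ⟨Ioi c, measurableSet_Ioi, Or.inl rfl, fun s hs => ?_, fun s hs => ?_⟩
    · have : c < s := hs
      rw [abs_of_pos h, abs_of_pos (by linarith)]; linarith
    · have : s ≤ c := not_lt.1 hs
      rw [abs_of_pos h, abs_of_pos (by linarith)]; linarith

/-- The uniform bound for the factors `g^{(k)}` in the boundary terms. -/
lemma pow_succ_mul_deriv_le (g : SchwartzMap ℝ ℂ) {k n : ℕ} (hkn : k + 1 ≤ n) (t : ℝ) :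
    ‖t‖ₑ ^ (k + 1) * ‖schwartzDeriv k g t‖ₑ ≤ ∫⁻ s, weightedDeriv n g s := by
  rcases eq_or_ne t 0 with rfl | ht
  · simp
  obtain ⟨S, hSm, hS, hle, -⟩ := exists_halfLine ht
  have key := norm_setIntegral_halfLine (hasDerivAt_schwartzDeriv k g)
    (schwartzDeriv (k + 1) g).integrable (schwartz_tendsto _) hS
  have hm := (schwartzDeriv (k + 1) g).continuous.measurable
  calc ‖t‖ₑ ^ (k + 1) * ‖schwartzDeriv k g t‖ₑ
      ≤ ‖t‖ₑ ^ (k + 1) * ∫⁻ s in S, ‖schwartzDeriv (k + 1) g s‖ₑ := by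
        gcongr
        rw [← enorm_norm, ← key, enorm_norm]
        exact enorm_integral_le_lintegral_enorm _
    _ = ∫⁻ s in S, ‖t‖ₑ ^ (k + 1) * ‖schwartzDeriv (k + 1) g s‖ₑ := by
        rw [lintegral_const_mul _ (by fun_prop)]
    _ ≤ ∫⁻ s in S, weightedDeriv (k + 1) g s := by
        refine setLIntegral_mono (by fun_prop) fun s hs => ?_
        unfold weightedDeriv
        gcongr ?_ ^ _ * _
        exact enorm_le_iff_norm_le.2 (hle s hs)
    _ ≤ ∫⁻ s, weightedDeriv (k + 1) g s := setLIntegral_le_lintegral _ _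
    _ ≤ _ := hardy_iterate_one hkn g

/-- The pointwise bound: two convolutions, one with all derivatives on `f` and one with all on `g`,
and the boundary terms at `t / 2`, in which the factor coming from `g` is already estimated. -/
lemma weighted_convolution_le (f g : SchwartzMap ℝ ℂ) (n : ℕ) {t : ℝ} (ht : t ≠ 0) :
    ‖t‖ₑ ^ n * ‖∫ s, schwartzDeriv n f (t - s) * g s‖ₑ ≤
      2 ^ n * ((∫⁻ s, weightedDeriv n f (t - s) * weightedDeriv 0 g s) +
        (∫⁻ s, weightedDeriv 0 f (t - s) * weightedDeriv n g s) +
        ∑ j ∈ Finset.range n, weightedDeriv (n - 1 - j) f (t * 2⁻¹) *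
          ∫⁻ s, weightedDeriv n g s) := by
  obtain ⟨c, rfl⟩ : ∃ c, t = 2 * c := ⟨t / 2, by ring⟩
  have hc : c ≠ 0 := by rintro rfl; simp at ht
  have hc2 : 2 * c * 2⁻¹ = c := by ring
  have hcc : 2 * c - c = c := by ring
  obtain ⟨S, hSm, hS, hle, hle'⟩ := exists_halfLine hc
  have hint := integrable_translate_mul (schwartzDeriv n f) g (2 * c)
  have hm1 := (schwartzDeriv n f).continuous.measurable
  have hm2 := (schwartzDeriv n g).continuous.measurable
  have hm3 := f.continuous.measurable
  have hm4 := g.continuous.measurable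
  have hparts : ‖∫ s in S, schwartzDeriv n f (2 * c - s) * g s‖ₑ ≤
      ‖∫ s in S, f (2 * c - s) * schwartzDeriv n g s‖ₑ + ∑ j ∈ Finset.range n,
        ‖schwartzDeriv (n - 1 - j) f c‖ₑ * ‖schwartzDeriv j g c‖ₑ := by
    have h := norm_setIntegral_parts_iterate f g n 0 (2 * c) hS
    simp only [zero_add, hcc, schwartzDeriv_zero] at h
    have h' := ENNReal.ofReal_le_ofReal h
    rw [ENNReal.ofReal_add (norm_nonneg _) (by positivity),
      ENNReal.ofReal_sum_of_nonneg (fun _ _ => by positivity)] at h'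
    simpa only [ENNReal.ofReal_mul (norm_nonneg _), ofReal_norm] using h'
  have htwo : ‖2 * c‖ₑ = 2 * ‖c‖ₑ := by
    rw [enorm_mul]
    congr 1
    rw [Real.enorm_of_nonneg (by norm_num)]
    simp
  rw [htwo, mul_pow, mul_assoc, hc2]
  gcongr
  rw [← integral_add_compl hSm hint]
  calc ‖c‖ₑ ^ n * ‖(∫ s in S, schwartzDeriv n f (2 * c - s) * g s) +
          ∫ s in Sᶜ, schwartzDeriv n f (2 * c - s) * g s‖ₑ
      ≤ ‖c‖ₑ ^ n * ((∫⁻ s in Sᶜ, ‖schwartzDeriv n f (2 * c - s) * g s‖ₑ) +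
          (∫⁻ s in S, ‖f (2 * c - s) * schwartzDeriv n g s‖ₑ) + ∑ j ∈ Finset.range n,
            ‖schwartzDeriv (n - 1 - j) f c‖ₑ * ‖schwartzDeriv j g c‖ₑ) := by
        gcongr
        refine (enorm_add_le _ _).trans ?_
        rw [add_comm, add_assoc]
        gcongr
        · exact enorm_integral_le_lintegral_enorm _
        · refine hparts.trans ?_
          gcongr
          exact enorm_integral_le_lintegral_enorm _
    _ = (∫⁻ s in Sᶜ, ‖c‖ₑ ^ n * ‖schwartzDeriv n f (2 * c - s) * g s‖ₑ) +
          (∫⁻ s in S, ‖c‖ₑ ^ n * ‖f (2 * c - s) * schwartzDeriv n g s‖ₑ) +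
          ∑ j ∈ Finset.range n,
            ‖c‖ₑ ^ n * (‖schwartzDeriv (n - 1 - j) f c‖ₑ * ‖schwartzDeriv j g c‖ₑ) := by
        rw [mul_add, mul_add, Finset.mul_sum, lintegral_const_mul _ (by fun_prop),
          lintegral_const_mul _ (by fun_prop)]
    _ ≤ _ := by
        gcongr ?_ + ?_ + ∑ j ∈ _, ?_ with j hj
        · refine le_trans ?_ (setLIntegral_le_lintegral Sᶜ _)
          refine setLIntegral_mono (by fun_prop) fun s hs => ?_
          simp only [weightedDeriv, pow_zero, one_mul, schwartzDeriv_zero, enorm_mul, ← mul_assoc]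
          gcongr ?_ ^ _ * _ * _
          exact enorm_le_iff_norm_le.2 (hle' s hs)
        · refine le_trans ?_ (setLIntegral_le_lintegral S _)
          refine setLIntegral_mono (by fun_prop) fun s hs => ?_
          simp only [weightedDeriv, pow_zero, one_mul, schwartzDeriv_zero, enorm_mul]
          rw [mul_left_comm]
          gcongr _ * (?_ ^ _ * _)
          exact enorm_le_iff_norm_le.2 (hle s hs)
        · have hj' : j < n := Finset.mem_range.1 hj
          have hn : n = (n - 1 - j) + (j + 1) := by omega
          calc ‖c‖ₑ ^ n * (‖schwartzDeriv (n - 1 - j) f c‖ₑ * ‖schwartzDeriv j g c‖ₑ)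
              = weightedDeriv (n - 1 - j) f c * (‖c‖ₑ ^ (j + 1) * ‖schwartzDeriv j g c‖ₑ) := by
                conv_lhs => enter [1]; rw [hn, pow_add]
                rw [weightedDeriv]
                ring
            _ ≤ _ := by
                gcongr
                exact pow_succ_mul_deriv_le g hj' c

/-- A constant for the `p`-th power of the module inequality. The powers of `2` and `n` with
exponent `p - 1` come from the convexity of `x ↦ x ^ p`, and `(p ^ p) ^ n` from the iterated Hardy
inequality. -/
noncomputable def moduleConst (p : ℝ) (n : ℕ) : ℝ≥0∞ :=
  ((2 : ℝ≥0∞) ^ n) ^ p * ((2 : ℝ≥0∞) ^ (p - 1) * ((2 : ℝ≥0∞) ^ (p - 1) *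
    (1 + (ENNReal.ofReal p ^ p) ^ n) +
      (n : ℝ≥0∞) ^ (p - 1) * (n * (2 * (ENNReal.ofReal p ^ p) ^ n))))

/-- The module inequality, raised to the power `p`, for lower Lebesgue integrals. -/
lemma lintegral_weighted_convolution_le {p : ℝ} (hp : 1 ≤ p) (n : ℕ) (f g : SchwartzMap ℝ ℂ) :
    ∫⁻ t, (‖t‖ₑ ^ n * ‖∫ s, schwartzDeriv n f (t - s) * g s‖ₑ) ^ p ≤
      moduleConst p n * ((∫⁻ t, weightedDeriv n f t ^ p) * (∫⁻ t, weightedDeriv n g t) ^ p) := by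
  have hp0 : 0 < p := by linarith
  set N := ∫⁻ t, weightedDeriv n f t ^ p with hN
  set I := ∫⁻ t, weightedDeriv n g t with hI
  set K := (ENNReal.ofReal p ^ p) ^ n with hK
  set A : ℝ → ℝ≥0∞ := fun t => ∫⁻ s, weightedDeriv n f (t - s) * weightedDeriv 0 g s with hA
  set B : ℝ → ℝ≥0∞ := fun t => ∫⁻ s, weightedDeriv 0 f (t - s) * weightedDeriv n g s with hB
  set E : ℕ → ℝ → ℝ≥0∞ := fun j t => weightedDeriv (n - 1 - j) f (t * 2⁻¹) * I with hE
  have hAm : Measurable A := by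
    apply Measurable.lintegral_prod_right'
      (f := fun z : ℝ × ℝ => weightedDeriv n f (z.1 - z.2) * weightedDeriv 0 g z.2)
    fun_prop
  have hBm : Measurable B := by
    apply Measurable.lintegral_prod_right'
      (f := fun z : ℝ × ℝ => weightedDeriv 0 f (z.1 - z.2) * weightedDeriv n g z.2)
    fun_prop
  have hEm : ∀ j, Measurable (E j) := fun j => by fun_prop
  have hAle : ∫⁻ t, A t ^ p ≤ N * I ^ p := by
    refine (young_lintegral hp (by fun_prop) (by fun_prop)).trans ?_
    gcongr
    exact hardy_iterate_one (Nat.zero_le n) g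
  have hBle : ∫⁻ t, B t ^ p ≤ K * (N * I ^ p) := by
    refine (young_lintegral hp (by fun_prop) (by fun_prop)).trans ?_
    rw [← mul_assoc]
    gcongr
    exact hardy_iterate_s15 hp (Nat.zero_le n) f
  have hEle : ∀ j, ∫⁻ t, E j t ^ p ≤ 2 * K * (N * I ^ p) := fun j => by
    simp only [hE, ENNReal.mul_rpow_of_nonneg _ _ hp0.le]
    rw [lintegral_mul_const _ (by fun_prop), lintegral_comp_mul_right_pos
      (φ := fun t => weightedDeriv (n - 1 - j) f t ^ p) (by fun_prop) (by norm_num),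
      ← mul_assoc, mul_assoc 2]
    gcongr
    · simp
    · exact hardy_iterate_s15 hp (by omega) f
  have hpt : ∀ t : ℝ, t ≠ 0 → (‖t‖ₑ ^ n * ‖∫ s, schwartzDeriv n f (t - s) * g s‖ₑ) ^ p ≤
      ((2 : ℝ≥0∞) ^ n) ^ p * ((2 : ℝ≥0∞) ^ (p - 1) * ((2 : ℝ≥0∞) ^ (p - 1) * (A t ^ p + B t ^ p) +
        (n : ℝ≥0∞) ^ (p - 1) * ∑ j ∈ Finset.range n, E j t ^ p)) := by
    intro t ht
    refine (ENNReal.rpow_le_rpow (weighted_convolution_le f g n ht) hp0.le).trans ?_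
    rw [ENNReal.mul_rpow_of_nonneg _ _ hp0.le]
    gcongr
    refine (ENNReal.rpow_add_le_mul_rpow_add_rpow _ _ hp).trans ?_
    gcongr
    · exact ENNReal.rpow_add_le_mul_rpow_add_rpow _ _ hp
    · simpa using ENNReal.rpow_sum_le_const_mul_sum_rpow (Finset.range n) (fun j => E j t) hp
  calc ∫⁻ t, (‖t‖ₑ ^ n * ‖∫ s, schwartzDeriv n f (t - s) * g s‖ₑ) ^ p
      ≤ ∫⁻ t, ((2 : ℝ≥0∞) ^ n) ^ p * ((2 : ℝ≥0∞) ^ (p - 1) * ((2 : ℝ≥0∞) ^ (p - 1) *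
          (A t ^ p + B t ^ p) +
            (n : ℝ≥0∞) ^ (p - 1) * ∑ j ∈ Finset.range n, E j t ^ p)) := by
        refine lintegral_mono_ae ?_
        filter_upwards [Measure.ae_ne volume (0 : ℝ)] with t ht using hpt t ht
    _ = ((2 : ℝ≥0∞) ^ n) ^ p * ((2 : ℝ≥0∞) ^ (p - 1) * ((2 : ℝ≥0∞) ^ (p - 1) *
          ((∫⁻ t, A t ^ p) + ∫⁻ t, B t ^ p) +
            (n : ℝ≥0∞) ^ (p - 1) * ∑ j ∈ Finset.range n, ∫⁻ t, E j t ^ p)) := by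
        rw [lintegral_const_mul _ (by fun_prop), lintegral_const_mul _ (by fun_prop),
          lintegral_add_left (by fun_prop), lintegral_const_mul _ (by fun_prop),
          lintegral_const_mul _ (by fun_prop), lintegral_add_left (by fun_prop),
          lintegral_finsetSum _ (fun j _ => by fun_prop)]
    _ ≤ ((2 : ℝ≥0∞) ^ n) ^ p * ((2 : ℝ≥0∞) ^ (p - 1) * ((2 : ℝ≥0∞) ^ (p - 1) *
          (N * I ^ p + K * (N * I ^ p)) +
            (n : ℝ≥0∞) ^ (p - 1) * ∑ j ∈ Finset.range n, 2 * K * (N * I ^ p))) := by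
        gcongr with j _
        exact hEle j
    _ = _ := by
        rw [moduleConst, Finset.sum_const, Finset.card_range, nsmul_eq_mul]
        ring

lemma moduleConst_ne_top {p : ℝ} (hp : 1 ≤ p) (n : ℕ) : moduleConst p n ≠ ∞ := by
  have h1 : (2 : ℝ≥0∞) ^ (p - 1) ≠ ∞ := ENNReal.rpow_ne_top_of_nonneg (by linarith) (by simp)
  have h2 : ((2 : ℝ≥0∞) ^ n) ^ p ≠ ∞ := ENNReal.rpow_ne_top_of_nonneg (by linarith) (by simp)
  have h3 : (n : ℝ≥0∞) ^ (p - 1) ≠ ∞ := ENNReal.rpow_ne_top_of_nonneg (by linarith) (by simp)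
  have h4 : (ENNReal.ofReal p ^ p) ^ n ≠ ∞ :=
    ENNReal.pow_ne_top (ENNReal.rpow_ne_top_of_nonneg (by linarith) (by simp))
  unfold moduleConst
  finiteness

/-- The integrand is integrable, because `t ^ n * f^{(n)}` is a Schwartz function, hence in `L^p`. -/
lemma lintegral_weightedDeriv_eq {p : ℝ} (hp : 1 ≤ p) (n : ℕ) (f : SchwartzMap ℝ ℂ) :
    ∫⁻ t, weightedDeriv n f t ^ p = ENNReal.ofReal
      (∫ t : ℝ, |t| ^ ((n : ℝ) * p) * ‖iteratedDeriv n (⇑f) t‖ ^ p) := by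
  have hp0 : 0 < p := by linarith
  have hg : (fun t : ℝ => t ^ n).HasTemperateGrowth := by fun_prop
  have hmem := (SchwartzMap.smulLeftCLM ℂ (fun t : ℝ => t ^ n) (schwartzDeriv n f)).memLp
    (ENNReal.ofReal p) volume
  have hi := hmem.integrable_norm_rpow (by simpa using hp0) (by simp)
  have heq : ∀ t : ℝ, ‖SchwartzMap.smulLeftCLM ℂ (fun t : ℝ => t ^ n) (schwartzDeriv n f) t‖ ^ p
      = |t| ^ ((n : ℝ) * p) * ‖iteratedDeriv n (⇑f) t‖ ^ p := fun t => by
    rw [SchwartzMap.smulLeftCLM_apply_apply hg, norm_smul, norm_pow, Real.norm_eq_abs,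
      Real.mul_rpow (by positivity) (norm_nonneg _), ← Real.rpow_natCast, ← Real.rpow_mul
      (abs_nonneg _), coe_schwartzDeriv]
  rw [ENNReal.toReal_ofReal hp0.le] at hi
  simp only [heq] at hi
  rw [ofReal_integral_eq_lintegral_ofReal hi (Eventually.of_forall fun t => by positivity)]
  refine lintegral_congr fun t => ?_
  rw [weightedDeriv, ENNReal.mul_rpow_of_nonneg _ _ hp0.le, ENNReal.ofReal_mul (by positivity),
    Real.rpow_mul (abs_nonneg _), Real.rpow_natCast,
    ← ENNReal.ofReal_rpow_of_nonneg (by positivity) hp0.le,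
    ← ENNReal.ofReal_rpow_of_nonneg (by positivity) hp0.le, ENNReal.ofReal_pow (abs_nonneg _),
    ofReal_norm, coe_schwartzDeriv, ← Real.norm_eq_abs, ofReal_norm]

/-- The Sobolev space `𝒯_p^{(n)}(|t|^n)` is a convolution module over the algebra
`𝒯_1^{(n)}(|t|^n)`, tested on Schwartz functions:
`|||f ∗ g|||_{n,p} ≤ C |||f|||_{n,p} |||g|||_{n,1}` (up to factorial normalizations). -/
theorem sobolev_convolution_module
    (p : ℝ) (hp : 1 < p) (n : ℕ) (hn : 1 ≤ n) :
    ∃ C : ℝ, 0 < C ∧ ∀ f g : SchwartzMap ℝ ℂ,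
      (∫ t : ℝ, |t| ^ ((n : ℝ) * p) *
          ‖iteratedDeriv n (fun x => ∫ s : ℝ, f (x - s) * g s) t‖ ^ p) ^ (1 / p) ≤
        C * (∫ t : ℝ, |t| ^ ((n : ℝ) * p) * ‖iteratedDeriv n (⇑f) t‖ ^ p) ^ (1 / p) *
          (∫ t : ℝ, |t| ^ (n : ℝ) * ‖iteratedDeriv n (⇑g) t‖) := by
  have hp0 : 0 < p := by linarith
  have hM := moduleConst_ne_top hp.le n
  -- The summand `1` only serves to make the constant positive.
  refine ⟨((moduleConst p n).toReal + 1) ^ (1 / p), by positivity, fun f g => ?_⟩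
  have hg1 : ∫⁻ t, weightedDeriv n g t =
      ENNReal.ofReal (∫ t : ℝ, |t| ^ (n : ℝ) * ‖iteratedDeriv n (⇑g) t‖) := by
    simpa using lintegral_weightedDeriv_eq le_rfl n g
  have key := lintegral_weighted_convolution_le hp.le n f g
  rw [hg1, lintegral_weightedDeriv_eq hp.le] at key
  set X := ∫ t : ℝ, |t| ^ ((n : ℝ) * p) * ‖iteratedDeriv n (⇑f) t‖ ^ p
  set Y := ∫ t : ℝ, |t| ^ (n : ℝ) * ‖iteratedDeriv n (⇑g) t‖
  have hX : 0 ≤ X := integral_nonneg fun t => by positivity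
  have hY : 0 ≤ Y := integral_nonneg fun t => by positivity
  have hconv := iteratedDeriv_convolution n f g 0
  rw [schwartzDeriv_zero, zero_add] at hconv
  rw [hconv]
  set Z := ∫ t : ℝ, |t| ^ ((n : ℝ) * p) * ‖∫ s : ℝ, schwartzDeriv n f (t - s) * g s‖ ^ p
  have hZ : 0 ≤ Z := integral_nonneg fun t => by positivity
  have hZle : ENNReal.ofReal Z ≤
      ∫⁻ t, (‖t‖ₑ ^ n * ‖∫ s, schwartzDeriv n f (t - s) * g s‖ₑ) ^ p := by
    rw [← Real.enorm_of_nonneg hZ]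
    refine (enorm_integral_le_lintegral_enorm _).trans_eq (lintegral_congr fun t => ?_)
    rw [enorm_mul, Real.rpow_mul (abs_nonneg _), Real.rpow_natCast,
      ENNReal.mul_rpow_of_nonneg _ _ hp0.le, Real.enorm_rpow_of_nonneg (by positivity) hp0.le,
      Real.enorm_rpow_of_nonneg (by positivity) hp0.le, enorm_pow, Real.enorm_abs, enorm_norm]
  have hle : Z ≤ ((moduleConst p n).toReal + 1) * (X * Y ^ p) := by
    have h := hZle.trans key
    rw [← ENNReal.ofReal_toReal hM, ENNReal.ofReal_rpow_of_nonneg hY hp0.le,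
      ← ENNReal.ofReal_mul hX, ← ENNReal.ofReal_mul (by positivity),
      ENNReal.ofReal_le_ofReal_iff (by positivity)] at h
    refine h.trans ?_
    gcongr
    linarith
  calc Z ^ (1 / p) ≤ (((moduleConst p n).toReal + 1) * (X * Y ^ p)) ^ (1 / p) := by gcongr
    _ = _ := by
      rw [Real.mul_rpow (by positivity) (by positivity), Real.mul_rpow hX (by positivity),
        ← Real.rpow_mul hY, mul_one_div_cancel hp0.ne', Real.rpow_one, mul_assoc]
end
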